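/- arXiv:2410.23899 — 3 statements merged into one kernel-verified Lean document; each statement's English description precedes it below -/
import Mathlib

section
/- (Monotone coupling, Lemma 2.6.) Fix k ∈ ℕ, integers T0 < T1, two functions g^t, g^b : ⟦T0,T1⟧ → [−∞,∞), and vectors x⃗^b, y⃗^b, x⃗^t, y⃗^t ∈ 𝔚_k. Assume g^t(r) ≥ g^b(r) for all r ∈ ⟦T0,T1⟧, x_i^t ≥ x_i^b and y_i^t ≥ y_i^b for i = 1,…,k, and that both Ω_Inter(T0,T1,x⃗^b,y⃗^b,∞,g^b) and Ω_Inter(T0,T1,x⃗^t,y⃗^t,∞,g^t) are nonempty. Then there exists a probability measure on the product Ω_Inter(T0,T1,x⃗^t,y⃗^t,∞,g^t) × Ω_Inter(T0,T1,x⃗^b,y⃗^b,∞,g^b) whose first marginal is the uniform measure on Ω_Inter(T0,T1,x⃗^t,y⃗^t,∞,g^t), whose second marginal is the uniform measure on Ω_Inter(T0,T1,x⃗^b,y⃗^b,∞,g^b), and which assigns probability 1 to the set of pairs (𝔔^t, 𝔔^b) satisfying Q_i^t(r) ≥ Q_i^b(r) for all i ∈ ⟦1,k⟧ and r ∈ ⟦T0,T1⟧.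 -/
open MeasureTheory Filter Topology ProbabilityTheory
open scoped ENNReal NNReal

/-- An increasing (integer) path on the integer interval `⟦T0, T1⟧`,
extended constantly to the rest of `ℤ`. -/
def IncrPath (T0 T1 : ℤ) (L : ℤ → ℤ) : Prop :=
  (∀ j : ℤ, T0 ≤ j → j < T1 → L j ≤ L (j + 1)) ∧
  (∀ s : ℤ, s ≤ T0 → L s = L T0) ∧ (∀ s : ℤ, T1 ≤ s → L s = L T1)

/-- The set `Ω(T0,T1,x,y)` of increasing paths from `(T0,x)` to `(T1,y)`. -/
def OmegaPath (T0 T1 : ℤ) (x y : ℤ) : Set (ℤ → ℤ) :=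
  {L | IncrPath T0 T1 L ∧ L T0 = x ∧ L T1 = y}

/-- The set `Ω_Inter(T0,T1,x⃗,y⃗,f,g)` of `k`-tuples of increasing paths with prescribed
entrance and exit data, interlacing with each other and with the boundary functions
`f` (above) and `g` (below). -/
def OmegaInter (T0 T1 : ℤ) {k : ℕ} (x y : Fin k → ℤ) (f g : ℤ → EReal) :
    Set (Fin k → ℤ → ℤ) :=
  {Q | (∀ i, IncrPath T0 T1 (Q i)) ∧ (∀ i, Q i T0 = x i) ∧ (∀ i, Q i T1 = y i) ∧
    ∀ r : ℤ, T0 < r → r ≤ T1 →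
      (∀ i : Fin k, (i : ℕ) = 0 → ((Q i r : ℝ) : EReal) ≤ f (r - 1)) ∧
      (∀ i j : Fin k, (j : ℕ) = (i : ℕ) + 1 → Q j r ≤ Q i (r - 1)) ∧
      (∀ i : Fin k, (i : ℕ) = k - 1 → g r ≤ ((Q i (r - 1) : ℝ) : EReal))}

/-!
Pointwise minima and maxima of interlacing ensembles interlace again, so the two ensembles are
finite subsets `s` (bottom) and `t` (top) of a distributive lattice such that `a ⊓ b ∈ s` and
`a ⊔ b ∈ t` whenever `a ∈ s` and `b ∈ t`. For `u ⊆ s`, Daykin's inequality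
`#u * #t ≤ #(u ⊼ t) * #(u ⊻ t)` then bounds `#u * #t` by `#s` times the number of elements of `t`
lying above some element of `u`. This is Hall's condition for a permutation `e` of `t × s` with
`z.2 ≤ (e z).1` for all `z`. If `z` is uniform on `t × s`, then `(e z).1` is uniform on `t` and
`z.2` is uniform on `s`, so the law of `((e z).1, z.2)` is the desired coupling.
-/

/-- The strong set order of Veinott on subsets of a lattice, by which ensembles with ordered
boundary data are compared. -/
structure StrongSetLE {α : Type*} [Lattice α] (s t : Set α) : Prop where
  inf_mem : ∀ a ∈ s, ∀ b ∈ t, a ⊓ b ∈ s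
  sup_mem : ∀ a ∈ s, ∀ b ∈ t, a ⊔ b ∈ t

namespace StrongSetLE

open scoped Finset FinsetFamily

variable {α : Type*} [DistribLattice α]

theorem card_mul_card_le_card_filter_mul_card {s t u : Finset α} [DecidableLE α]
    (h : StrongSetLE (s : Set α) t) (hu : u ⊆ s) :
    #u * #t ≤ #{b ∈ t | ∃ a ∈ u, a ≤ b} * #s := by
  classical
  have hinfs : u ⊼ t ⊆ s :=
    Finset.infs_subset_iff.2 fun a ha b hb => h.inf_mem a (hu ha) b hb
  have hsups : u ⊻ t ⊆ {b ∈ t | ∃ a ∈ u, a ≤ b} :=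
    Finset.sups_subset_iff.2 fun a ha b hb =>
      Finset.mem_filter.2 ⟨h.sup_mem a (hu ha) b hb, a, ha, le_sup_left⟩
  calc #u * #t ≤ #(u ⊼ t) * #(u ⊻ t) := Finset.le_card_infs_mul_card_sups u t
    _ ≤ #s * #{b ∈ t | ∃ a ∈ u, a ≤ b} :=
      Nat.mul_le_mul (Finset.card_le_card hinfs) (Finset.card_le_card hsups)
    _ = _ := Nat.mul_comm _ _

theorem exists_perm_snd_le_fst {s t : Finset α} (h : StrongSetLE (s : Set α) t) :
    ∃ e : Equiv.Perm (t × s), ∀ z, (z.2 : α) ≤ (e z).1 := by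
  classical
  have hall (S : Finset (t × s)) :
      #S ≤ #{w : t × s | ∃ z ∈ S, (z.2 : α) ≤ w.1} := by
    let u : Finset α := S.image fun z => z.2
    have hu : u ⊆ s := Finset.image_subset_iff.2 fun z _ => z.2.2
    have hS : #S ≤ #(u ×ˢ t) := Finset.card_le_card_of_injOn (fun z => (z.2, z.1))
      (fun z hz => Finset.mem_product.2 ⟨Finset.mem_image_of_mem _ hz, z.1.2⟩)
      fun z _ w _ hzw => Prod.ext (Subtype.ext (congrArg Prod.snd hzw))
        (Subtype.ext (congrArg Prod.fst hzw))
    have hneighbours : #({b ∈ t | ∃ a ∈ u, a ≤ b} ×ˢ s) ≤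
        #{w : t × s | ∃ z ∈ S, (z.2 : α) ≤ w.1} := by
      refine Finset.card_le_card_of_surjOn (fun w => (w.1, w.2)) ?_
      rintro ⟨b, c⟩ hbc
      simp only [Finset.coe_product, Set.mem_prod, Finset.mem_coe, Finset.mem_filter,
        Finset.exists_mem_image, u] at hbc
      obtain ⟨⟨hb, hle⟩, hc⟩ := hbc
      exact ⟨(⟨b, hb⟩, ⟨c, hc⟩), by simpa using hle, rfl⟩
    rw [Finset.card_product] at hS hneighbours
    exact hS.trans ((h.card_mul_card_le_card_filter_mul_card hu).trans hneighbours)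
  obtain ⟨f, hf, hle⟩ := (Fintype.all_card_le_filter_rel_iff_exists_injective
    fun z w : t × s => (z.2 : α) ≤ w.1).1 hall
  exact ⟨.ofBijective f (Finite.injective_iff_bijective.1 hf), hle⟩

end StrongSetLE

section Uniform

open scoped Finset

variable {α ι : Type*} [MeasurableSpace α] [MeasurableSingletonClass α]

theorem uniformOn_coe_finset_apply (s : Finset α) (u : Set α) [DecidablePred (· ∈ u)] :
    uniformOn (s : Set α) u = #{a ∈ s | a ∈ u} / #s := by
  have hinter : (s : Set α) ∩ u = ({a ∈ s | a ∈ u} : Finset α) := (Finset.coe_filter ..).symm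
  rw [uniformOn, cond_apply s.measurableSet, hinter, Measure.count_apply_finset,
    Measure.count_apply_finset, ENNReal.div_eq_inv_mul]

theorem uniformOn_singleton_of_mem {s : Set α} (hs : s.Finite) {a : α} (ha : a ∈ s) :
    uniformOn s {a} = (Nat.card s : ℝ≥0∞)⁻¹ := by
  classical
  lift s to Finset α using hs
  rw [← Finset.coe_singleton, uniformOn_apply_finset,
    Finset.inter_singleton_of_mem (Finset.mem_coe.1 ha)]
  simp

theorem map_uniformOn_of_card_fiber [MeasurableSpace ι] [MeasurableSingletonClass ι]
    [DecidableEq α] {f : ι → α} (hf : Measurable f) {s : Finset ι} {t : Finset α} {n : ℕ}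
    (hn : n ≠ 0) (hst : ∀ i ∈ s, f i ∈ t) (hfiber : ∀ a ∈ t, #{i ∈ s | f i = a} = n) :
    (uniformOn (s : Set ι)).map f = uniformOn (t : Set α) := by
  classical
  have hcard (u : Set α) : #{i ∈ s | f i ∈ u} = n * #{a ∈ t | a ∈ u} := by
    calc #{i ∈ s | f i ∈ u} = #{i ∈ s | f i ∈ t.filter (· ∈ u)} := by
          congr 1
          exact Finset.filter_congr fun i hi => by simp [hst i hi]
      _ = ∑ a ∈ t with a ∈ u, #{i ∈ s | f i = a} :=
          (Finset.sum_card_fiberwise_eq_card_filter ..).symm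
      _ = n * #{a ∈ t | a ∈ u} := by
          rw [Finset.sum_const_nat fun a ha => hfiber a (Finset.mem_filter.1 ha).1, mul_comm]
  have hs : #s = n * #t := by
    simpa using hcard Set.univ
  ext u hu
  rw [Measure.map_apply hf hu, uniformOn_coe_finset_apply, uniformOn_coe_finset_apply, hs]
  simp only [Set.mem_preimage, hcard, Nat.cast_mul]
  exact ENNReal.mul_div_mul_left _ _ (Nat.cast_ne_zero.2 hn) (ENNReal.natCast_ne_top n)

theorem StrongSetLE.exists_coupling_uniformOn [DistribLattice α] {s t : Set α}
    (h : StrongSetLE s t) (hs : s.Finite) (ht : t.Finite) (hs' : s.Nonempty) (ht' : t.Nonempty) :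
    ∃ μ : Measure (α × α), IsProbabilityMeasure μ ∧
      μ.map Prod.fst = uniformOn t ∧ μ.map Prod.snd = uniformOn s ∧
      ∀ᵐ p ∂μ, p.1 ∈ t ∧ p.2 ∈ s ∧ p.2 ≤ p.1 := by
  classical
  lift s to Finset α using hs
  lift t to Finset α using ht
  obtain ⟨e, he⟩ := h.exists_perm_snd_le_fst
  let F : t × s → α × α := fun z => ((e z).1, z.2)
  refine ⟨(uniformOn (Finset.univ : Finset (t × s))).map F, ?_, ?_, ?_, ?_⟩
  · have := hs'.to_subtype
    have := ht'.to_subtype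
    have := isProbabilityMeasure_uniformOn (Finset.univ : Finset (t × s)).finite_toSet
      Finset.univ_nonempty
    exact Measure.isProbabilityMeasure_map (measurable_of_finite F).aemeasurable
  · rw [Measure.map_map measurable_fst (measurable_of_finite F)]
    refine map_uniformOn_of_card_fiber (measurable_of_finite _) (Finset.card_ne_zero.2 hs')
      (fun z _ => (e z).1.2) fun a ha => ?_
    calc #{z | ((e z).1 : α) = a} = #({⟨a, ha⟩} ×ˢ Finset.univ : Finset (t × s)) :=
          Finset.card_equiv e fun z => by
            simp only [Finset.mem_filter_univ, Finset.mem_product, Finset.mem_singleton,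
              Finset.mem_univ, and_true, Subtype.ext_iff]
      _ = #s := by simp
  · rw [Measure.map_map measurable_snd (measurable_of_finite F)]
    refine map_uniformOn_of_card_fiber (measurable_of_finite _) (Finset.card_ne_zero.2 ht')
      (fun z _ => z.2.2) fun a ha => ?_
    calc #{z : t × s | (z.2 : α) = a} = #(Finset.univ ×ˢ {⟨a, ha⟩} : Finset (t × s)) :=
          Finset.card_equiv (.refl _) fun z => by
            simp only [Finset.mem_filter_univ, Finset.mem_product, Finset.mem_singleton,
              Finset.mem_univ, true_and, Subtype.ext_iff, Equiv.refl_apply]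
      _ = #t := by simp
  · filter_upwards [ae_map_mem_range F (Set.finite_range F).measurableSet _]
    rintro _ ⟨z, rfl⟩
    exact ⟨(e z).1.2, z.2.2, he z⟩

end Uniform

namespace IncrPath

variable {T0 T1 : ℤ} {L M : ℤ → ℤ}

theorem monotone (hL : IncrPath T0 T1 L) : Monotone L := by
  obtain ⟨hstep, hleft, hright⟩ := hL
  refine monotone_int_of_le_succ fun n => ?_
  rcases lt_or_ge n T0 with hn | hn
  · rw [hleft n hn.le, hleft (n + 1) hn]
  rcases lt_or_ge n T1 with hn' | hn'
  · exact hstep n hn hn'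
  · rw [hright n hn', hright (n + 1) (by lia)]

theorem sup (hL : IncrPath T0 T1 L) (hM : IncrPath T0 T1 M) : IncrPath T0 T1 (L ⊔ M) :=
  ⟨fun j h h' => sup_le_sup (hL.1 j h h') (hM.1 j h h'),
    fun s h => congrArg₂ (· ⊔ ·) (hL.2.1 s h) (hM.2.1 s h),
    fun s h => congrArg₂ (· ⊔ ·) (hL.2.2 s h) (hM.2.2 s h)⟩

theorem inf (hL : IncrPath T0 T1 L) (hM : IncrPath T0 T1 M) : IncrPath T0 T1 (L ⊓ M) :=
  ⟨fun j h h' => inf_le_inf (hL.1 j h h') (hM.1 j h h'),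
    fun s h => congrArg₂ (· ⊓ ·) (hL.2.1 s h) (hM.2.1 s h),
    fun s h => congrArg₂ (· ⊓ ·) (hL.2.2 s h) (hM.2.2 s h)⟩

end IncrPath

theorem coe_intCast_max (m n : ℤ) :
    (((m ⊔ n : ℤ) : ℝ) : EReal) = ((m : ℝ) : EReal) ⊔ ((n : ℝ) : EReal) := by
  rw [Int.cast_max, EReal.coe_strictMono.monotone.map_max]

theorem coe_intCast_min (m n : ℤ) :
    (((m ⊓ n : ℤ) : ℝ) : EReal) = ((m : ℝ) : EReal) ⊓ ((n : ℝ) : EReal) := by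
  rw [Int.cast_min, EReal.coe_strictMono.monotone.map_min]

namespace OmegaInter

variable {T0 T1 : ℤ} {k : ℕ} {x y x' y' : Fin k → ℤ} {f g f' g' : ℤ → EReal}
  {Q Q' : Fin k → ℤ → ℤ}

theorem finite : (OmegaInter T0 T1 x y f g).Finite := by
  refine Set.Finite.of_finite_image (f := fun Q i (r : Set.Icc T0 T1) => Q i r) ?_ ?_
  · refine (Set.finite_Icc (fun i _ => x i) (fun i _ => y i)).subset ?_
    rintro _ ⟨Q, ⟨hpath, hx, hy, -⟩, rfl⟩
    exact ⟨fun i r => (hx i).ge.trans ((hpath i).monotone r.2.1),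
      fun i r => ((hpath i).monotone r.2.2).trans (hy i).le⟩
  · rintro Q ⟨hpath, hx, hy, -⟩ Q' ⟨hpath', hx', hy', -⟩ heq
    ext i r
    rcases lt_or_ge r T0 with hr | hr
    · rw [(hpath i).2.1 r hr.le, (hpath' i).2.1 r hr.le, hx, hx']
    rcases lt_or_ge T1 r with hr' | hr'
    · rw [(hpath i).2.2 r hr'.le, (hpath' i).2.2 r hr'.le, hy, hy']
    · exact congrFun₂ heq i ⟨r, hr, hr'⟩

theorem subset_of_boundary_le (hf : ∀ r, T0 ≤ r → r ≤ T1 → f r ≤ f' r)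
    (hg : ∀ r, T0 ≤ r → r ≤ T1 → g' r ≤ g r) :
    OmegaInter T0 T1 x y f g ⊆ OmegaInter T0 T1 x y f' g' := by
  rintro Q ⟨hpath, hx, hy, hinter⟩
  refine ⟨hpath, hx, hy, fun r hr hr' => ?_⟩
  obtain ⟨hupper, hmid, hlower⟩ := hinter r hr hr'
  exact ⟨fun i hi => (hupper i hi).trans (hf _ (by lia) (by lia)), hmid,
    fun i hi => (hg r hr.le hr').trans (hlower i hi)⟩

theorem sup_mem (hQ : Q ∈ OmegaInter T0 T1 x y f g) (hQ' : Q' ∈ OmegaInter T0 T1 x' y' f' g') :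
    Q ⊔ Q' ∈ OmegaInter T0 T1 (x ⊔ x') (y ⊔ y') (f ⊔ f') (g ⊔ g') := by
  obtain ⟨hpath, hx, hy, hinter⟩ := hQ
  obtain ⟨hpath', hx', hy', hinter'⟩ := hQ'
  refine ⟨fun i => (hpath i).sup (hpath' i), fun i => congrArg₂ (· ⊔ ·) (hx i) (hx' i),
    fun i => congrArg₂ (· ⊔ ·) (hy i) (hy' i), fun r hr hr' => ?_⟩
  obtain ⟨hupper, hmid, hlower⟩ := hinter r hr hr'
  obtain ⟨hupper', hmid', hlower'⟩ := hinter' r hr hr'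
  simp only [Pi.sup_apply, coe_intCast_max]
  exact ⟨fun i hi => sup_le_sup (hupper i hi) (hupper' i hi),
    fun i j hij => sup_le_sup (hmid i j hij) (hmid' i j hij),
    fun i hi => sup_le_sup (hlower i hi) (hlower' i hi)⟩

theorem inf_mem (hQ : Q ∈ OmegaInter T0 T1 x y f g) (hQ' : Q' ∈ OmegaInter T0 T1 x' y' f' g') :
    Q ⊓ Q' ∈ OmegaInter T0 T1 (x ⊓ x') (y ⊓ y') (f ⊓ f') (g ⊓ g') := by
  obtain ⟨hpath, hx, hy, hinter⟩ := hQ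
  obtain ⟨hpath', hx', hy', hinter'⟩ := hQ'
  refine ⟨fun i => (hpath i).inf (hpath' i), fun i => congrArg₂ (· ⊓ ·) (hx i) (hx' i),
    fun i => congrArg₂ (· ⊓ ·) (hy i) (hy' i), fun r hr hr' => ?_⟩
  obtain ⟨hupper, hmid, hlower⟩ := hinter r hr hr'
  obtain ⟨hupper', hmid', hlower'⟩ := hinter' r hr hr'
  simp only [Pi.inf_apply, coe_intCast_min]
  exact ⟨fun i hi => inf_le_inf (hupper i hi) (hupper' i hi),
    fun i j hij => inf_le_inf (hmid i j hij) (hmid' i j hij),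
    fun i hi => inf_le_inf (hlower i hi) (hlower' i hi)⟩

theorem strongSetLE (hx : x ≤ x') (hy : y ≤ y') (hf : ∀ r, T0 ≤ r → r ≤ T1 → f r ≤ f' r)
    (hg : ∀ r, T0 ≤ r → r ≤ T1 → g r ≤ g' r) :
    StrongSetLE (OmegaInter T0 T1 x y f g) (OmegaInter T0 T1 x' y' f' g') where
  inf_mem Q hQ Q' hQ' := by
    have hmem := inf_mem hQ hQ'
    rw [inf_eq_left.2 hx, inf_eq_left.2 hy] at hmem
    exact subset_of_boundary_le (fun _ _ _ => inf_le_left)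
      (fun r hr hr' => le_inf le_rfl (hg r hr hr')) hmem
  sup_mem Q hQ Q' hQ' := by
    have hmem := sup_mem hQ hQ'
    rw [sup_eq_right.2 hx, sup_eq_right.2 hy] at hmem
    exact subset_of_boundary_le (fun r hr hr' => sup_le (hf r hr hr') le_rfl)
      (fun _ _ _ => le_sup_right) hmem

end OmegaInter

theorem monotone_coupling_general {k : ℕ} {T0 T1 : ℤ} {ft fb gt gb : ℤ → EReal}
    {xb yb xt yt : Fin k → ℤ}
    (hf : ∀ r, T0 ≤ r → r ≤ T1 → fb r ≤ ft r) (hg : ∀ r, T0 ≤ r → r ≤ T1 → gb r ≤ gt r)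
    (hx : ∀ i, xb i ≤ xt i) (hy : ∀ i, yb i ≤ yt i)
    (hneb : (OmegaInter T0 T1 xb yb fb gb).Nonempty)
    (hnet : (OmegaInter T0 T1 xt yt ft gt).Nonempty) :
    ∃ μ : Measure ((Fin k → ℤ → ℤ) × (Fin k → ℤ → ℤ)),
      IsProbabilityMeasure μ ∧
      (∀ Q ∈ OmegaInter T0 T1 xt yt ft gt,
        μ.map Prod.fst {Q} = ((Nat.card ↥(OmegaInter T0 T1 xt yt ft gt) : ℝ≥0∞))⁻¹) ∧
      (∀ Q ∈ OmegaInter T0 T1 xb yb fb gb,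
        μ.map Prod.snd {Q} = ((Nat.card ↥(OmegaInter T0 T1 xb yb fb gb) : ℝ≥0∞))⁻¹) ∧
      μ {pq | pq.1 ∈ OmegaInter T0 T1 xt yt ft gt ∧ pq.2 ∈ OmegaInter T0 T1 xb yb fb gb ∧
              ∀ (i : Fin k) (r : ℤ), T0 ≤ r → r ≤ T1 → pq.2 i r ≤ pq.1 i r} = 1 := by
  obtain ⟨μ, _, hfst, hsnd, hae⟩ :=
    (OmegaInter.strongSetLE hx hy hf hg).exists_coupling_uniformOn
      OmegaInter.finite OmegaInter.finite hneb hnet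
  refine ⟨μ, inferInstance, fun Q hQ => ?_, fun Q hQ => ?_, ?_⟩
  · rw [hfst, uniformOn_singleton_of_mem OmegaInter.finite hQ]
  · rw [hsnd, uniformOn_singleton_of_mem OmegaInter.finite hQ]
  · refine (measure_congr (eventuallyEq_univ.2 ?_)).trans measure_univ
    filter_upwards [hae] with pq ⟨htop, hbot, hle⟩
    exact ⟨htop, hbot, fun i r _ _ => hle i r⟩

/-- (Monotone coupling, Lemma 2.6.) Interlacing ensembles with ordered boundary data can be
coupled monotonically: there is a probability measure on pairs of configurations whose
marginals are uniform on `Ω_Inter(T0,T1,x⃗ᵗ,y⃗ᵗ,∞,gᵗ)` and `Ω_Inter(T0,T1,x⃗ᵇ,y⃗ᵇ,∞,gᵇ)`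
respectively, and which is supported on ordered pairs. -/
theorem monotone_coupling
    (k : ℕ) (T0 T1 : ℤ) (hT : T0 < T1)
    (gt gb : ℤ → EReal)
    (hgtTop : ∀ r : ℤ, T0 ≤ r → r ≤ T1 → gt r ≠ ⊤)
    (hgbTop : ∀ r : ℤ, T0 ≤ r → r ≤ T1 → gb r ≠ ⊤)
    (hgle : ∀ r : ℤ, T0 ≤ r → r ≤ T1 → gb r ≤ gt r)
    (xb yb xt yt : Fin k → ℤ)
    (hxb : ∀ i j : Fin k, i ≤ j → xb j ≤ xb i) (hyb : ∀ i j : Fin k, i ≤ j → yb j ≤ yb i)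
    (hxt : ∀ i j : Fin k, i ≤ j → xt j ≤ xt i) (hyt : ∀ i j : Fin k, i ≤ j → yt j ≤ yt i)
    (hxle : ∀ i, xb i ≤ xt i) (hyle : ∀ i, yb i ≤ yt i)
    (hneb : (OmegaInter T0 T1 xb yb (fun _ => (⊤ : EReal)) gb).Nonempty)
    (hnet : (OmegaInter T0 T1 xt yt (fun _ => (⊤ : EReal)) gt).Nonempty) :
    ∃ μ : Measure ((Fin k → ℤ → ℤ) × (Fin k → ℤ → ℤ)),
      IsProbabilityMeasure μ ∧
      (∀ Q ∈ OmegaInter T0 T1 xt yt (fun _ => (⊤ : EReal)) gt,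
        μ.map Prod.fst {Q} =
          ((Nat.card ↥(OmegaInter T0 T1 xt yt (fun _ => (⊤ : EReal)) gt) : ℝ≥0∞))⁻¹) ∧
      (∀ Q ∈ OmegaInter T0 T1 xb yb (fun _ => (⊤ : EReal)) gb,
        μ.map Prod.snd {Q} =
          ((Nat.card ↥(OmegaInter T0 T1 xb yb (fun _ => (⊤ : EReal)) gb) : ℝ≥0∞))⁻¹) ∧
      μ {pq | pq.1 ∈ OmegaInter T0 T1 xt yt (fun _ => (⊤ : EReal)) gt ∧
              pq.2 ∈ OmegaInter T0 T1 xb yb (fun _ => (⊤ : EReal)) gb ∧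
              ∀ (i : Fin k) (r : ℤ), T0 ≤ r → r ≤ T1 → pq.2 i r ≤ pq.1 i r} = 1 :=
  monotone_coupling_general (fun _ _ _ => le_rfl) hgle hxle hyle hneb hnet
end

section
/- (Lemma 2.9, part 1.) With the scaling setup described in the context, there exists N0 ∈ ℕ such that for all n ≥ N0 the set Ω_Inter(A_n, B_n, X⃗^n, Y⃗^n, F_n, G_n) is nonempty. -/
open MeasureTheory Filter Topology ProbabilityTheory
open scoped ENNReal NNReal

/-!
Away from discretization the claim is that ordered curves can be threaded between the barriers with
a uniform gap. At each time the admissible tuples, paired with their gap, form a convex set, and a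
constant tuple stays admissible for a short while; so a smooth partition of unity glues local
constant choices, even with prescribed values at `a` and `b`. By compactness the result is
Lipschitz with a positive gap `δ`, and moving its endpoints slightly to match the discrete data
costs little of either.

Multiply such a curve by the spatial scale `S`, add the drift `p t` and take integer parts. One step
of the grid moves the scaled curve by `O(S / d) → 0`, so the drift makes the paths increasing, while
the gaps `S δ → ∞` dominate the bounded errors from a unit time shift and from rounding.
-/

open Set
open scoped ContDiff Manifold

section GappedTuples

variable {k : ℕ}

/-- The pairs `(v, δ)` where `v` is a decreasing tuple whose gaps, including those to a lower
barrier `l` and an upper barrier `u`, are at least `δ > 0`. Carrying `δ` along as a coordinate turns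
a uniform gap along a curve of tuples into the minimum of a continuous function. -/
def gappedTuples (k : ℕ) (l u : EReal) : Set ((Fin k → ℝ) × ℝ) :=
  {q | 0 < q.2 ∧ (∀ i j, i < j → q.1 j + q.2 ≤ q.1 i) ∧
    ∀ i, l ≤ ((q.1 i - q.2 : ℝ) : EReal) ∧ ((q.1 i + q.2 : ℝ) : EReal) ≤ u}

theorem convex_setOf_le_coe (l : EReal) : Convex ℝ {c : ℝ | l ≤ (c : EReal)} :=
  OrdConnected.convex ⟨fun _ hc _ _ _ hz => hc.trans (EReal.coe_le_coe_iff.2 hz.1)⟩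

theorem convex_setOf_coe_le (u : EReal) : Convex ℝ {c : ℝ | (c : EReal) ≤ u} :=
  OrdConnected.convex ⟨fun _ _ _ hc _ hz => (EReal.coe_le_coe_iff.2 hz.2).trans hc⟩

theorem convex_gappedTuples (l u : EReal) : Convex ℝ (gappedTuples k l u) := by
  rintro ⟨v, δ⟩ ⟨hδ, hv, hlu⟩ ⟨w, ε⟩ ⟨hε, hw, hlu'⟩ s t hs ht hst
  refine ⟨convex_Ioi (0 : ℝ) hδ hε hs ht hst, fun i j hij => ?_, fun i => ⟨?_, ?_⟩⟩
  · have := add_le_add (mul_le_mul_of_nonneg_left (hv i j hij) hs)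
      (mul_le_mul_of_nonneg_left (hw i j hij) ht)
    simp only [Prod.fst_add, Prod.snd_add, Prod.smul_mk, Pi.add_apply, Pi.smul_apply, smul_eq_mul]
    linarith
  · have : l ≤ ((s * (v i - δ) + t * (w i - ε) : ℝ) : EReal) :=
      convex_setOf_le_coe l (hlu i).1 (hlu' i).1 hs ht hst
    convert this using 2
    simp only [Prod.fst_add, Prod.snd_add, Prod.smul_mk, Pi.add_apply, Pi.smul_apply, smul_eq_mul]
    ring
  · have : ((s * (v i + δ) + t * (w i + ε) : ℝ) : EReal) ≤ u :=
      convex_setOf_coe_le u (hlu i).2 (hlu' i).2 hs ht hst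
    convert this using 2
    simp only [Prod.fst_add, Prod.snd_add, Prod.smul_mk, Pi.add_apply, Pi.smul_apply, smul_eq_mul]
    ring

theorem exists_strictAnti_forall_mem_Ioo (k : ℕ) {l u : EReal} (h : l < u) :
    ∃ v : Fin k → ℝ, StrictAnti v ∧ ∀ i, (v i : EReal) ∈ Ioo l u := by
  obtain ⟨c₁, hl₁, hu₁⟩ := EReal.lt_iff_exists_real_btwn.1 h
  obtain ⟨c₀, hl₀, h₀₁⟩ := EReal.lt_iff_exists_real_btwn.1 hl₁
  have hc : 0 < c₁ - c₀ := sub_pos.2 (EReal.coe_lt_coe_iff.1 h₀₁)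
  refine ⟨fun i => c₀ + (c₁ - c₀) / (i + 1), fun i j hij => ?_, fun i => ⟨?_, ?_⟩⟩
  · have : ((i : ℕ) : ℝ) < (j : ℕ) := by exact_mod_cast hij
    dsimp only
    gcongr
  · exact hl₀.trans (EReal.coe_lt_coe_iff.2 (lt_add_of_pos_right _ (by positivity)))
  · refine lt_of_le_of_lt (EReal.coe_le_coe_iff.2 ?_) hu₁
    have : (c₁ - c₀) / ((i : ℕ) + 1) ≤ c₁ - c₀ :=
      div_le_self hc.le (le_add_of_nonneg_left (Nat.cast_nonneg i))
    linarith

theorem eventually_lt_coe_sub_and_coe_add_lt {l u : EReal} {c : ℝ} (hc : (c : EReal) ∈ Ioo l u) :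
    ∀ᶠ δ in 𝓝[>] (0 : ℝ), l < ((c - δ : ℝ) : EReal) ∧ ((c + δ : ℝ) : EReal) < u := by
  have hsub : Continuous fun δ : ℝ => ((c - δ : ℝ) : EReal) :=
    continuous_coe_real_ereal.comp (by fun_prop)
  have hadd : Continuous fun δ : ℝ => ((c + δ : ℝ) : EReal) :=
    continuous_coe_real_ereal.comp (by fun_prop)
  refine ((hsub.tendsto' 0 c (by simp)).eventually_const_lt hc.1).and
    ((hadd.tendsto' 0 c (by simp)).eventually_lt_const hc.2) |>.filter_mono nhdsWithin_le_nhds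

theorem eventually_mem_gappedTuples {M : Type*} [TopologicalSpace M] {f g : M → EReal} {m : M}
    (hf : LowerSemicontinuousAt f m) (hg : UpperSemicontinuousAt g m) {v : Fin k → ℝ}
    (hv : StrictAnti v) (hvfg : ∀ i, (v i : EReal) ∈ Ioo (g m) (f m)) :
    ∃ δ, ∀ᶠ t in 𝓝 m, (v, δ) ∈ gappedTuples k (g t) (f t) := by
  have hgap : ∀ᶠ δ in 𝓝[>] (0 : ℝ), ∀ i j, i < j → δ < v i - v j := by
    simp only [eventually_all]
    exact fun i j hij => (eventually_lt_nhds (sub_pos.2 (hv hij))).filter_mono nhdsWithin_le_nhds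
  have hbarrier : ∀ᶠ δ in 𝓝[>] (0 : ℝ), ∀ i,
      g m < ((v i - δ : ℝ) : EReal) ∧ ((v i + δ : ℝ) : EReal) < f m :=
    eventually_all.2 fun i => eventually_lt_coe_sub_and_coe_add_lt (hvfg i)
  obtain ⟨δ, hδ, hvδ, hlu⟩ := (eventually_mem_nhdsWithin.and (hgap.and hbarrier)).exists
  refine ⟨δ, (eventually_all.2 fun i => (hg _ (hlu i).1).and (hf _ (hlu i).2)).mono fun t ht =>
    ⟨hδ, fun i j hij => ?_, fun i => ⟨(ht i).1.le, (ht i).2.le⟩⟩⟩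
  linarith [hvδ i j hij]

/-- Local constant solutions exist by semicontinuity, near `a` and `b` because the prescribed values
are themselves admissible there; a smooth partition of unity glues them since all constraints are
convex. -/
theorem exists_contDiff_forall_mem_gappedTuples {f g : ℝ → EReal} (hf : LowerSemicontinuous f)
    (hg : UpperSemicontinuous g) (hgf : ∀ t, g t < f t) {a b : ℝ} (hab : a ≠ b) {x y : Fin k → ℝ}
    (hx : StrictAnti x) (hy : StrictAnti y) (hxfg : ∀ i, (x i : EReal) ∈ Ioo (g a) (f a))
    (hyfg : ∀ i, (y i : EReal) ∈ Ioo (g b) (f b)) :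
    ∃ q : ℝ → (Fin k → ℝ) × ℝ, ContDiff ℝ ∞ q ∧ (q a).1 = x ∧ (q b).1 = y ∧
      ∀ t, q t ∈ gappedTuples k (g t) (f t) := by
  let S (t : ℝ) : Set ((Fin k → ℝ) × ℝ) :=
    gappedTuples k (g t) (f t) ∩ {q | (t = a → q.1 = x) ∧ (t = b → q.1 = y)}
  have hconv (t : ℝ) : Convex ℝ (S t) := by
    refine (convex_gappedTuples _ _).inter ?_
    rintro q ⟨hqx, hqy⟩ r ⟨hrx, hry⟩ c d - - hcd
    refine ⟨fun h => ?_, fun h => ?_⟩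
    · rw [Prod.fst_add, Prod.smul_fst, Prod.smul_fst, hqx h, hrx h, ← add_smul, hcd, one_smul]
    · rw [Prod.fst_add, Prod.smul_fst, Prod.smul_fst, hqy h, hry h, ← add_smul, hcd, one_smul]
  have hloc (t : ℝ) : ∃ c, ∀ᶠ s in 𝓝 t, c ∈ S s := by
    obtain ⟨v, hv, hvfg, hvab⟩ : ∃ v : Fin k → ℝ, StrictAnti v ∧
        (∀ i, (v i : EReal) ∈ Ioo (g t) (f t)) ∧
        ∀ᶠ s in 𝓝 t, (s = a → v = x) ∧ (s = b → v = y) := by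
      rcases eq_or_ne t a with rfl | hta
      · exact ⟨x, hx, hxfg, (eventually_ne_nhds hab).mono fun s hs => ⟨fun _ => rfl, hs.elim⟩⟩
      rcases eq_or_ne t b with rfl | htb
      · exact ⟨y, hy, hyfg, (eventually_ne_nhds hta).mono fun s hs => ⟨hs.elim, fun _ => rfl⟩⟩
      · obtain ⟨v, hv, hvfg⟩ := exists_strictAnti_forall_mem_Ioo k (hgf t)
        exact ⟨v, hv, hvfg, ((eventually_ne_nhds hta).and (eventually_ne_nhds htb)).mono
          fun s hs => ⟨hs.1.elim, hs.2.elim⟩⟩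
    obtain ⟨δ, hδ⟩ := eventually_mem_gappedTuples (hf t) (hg t) hv hvfg
    exact ⟨(v, δ), hδ.and hvab⟩
  obtain ⟨q, hq⟩ :=
    exists_contMDiffMap_forall_mem_convex_of_local_const (n := ⊤) 𝓘(ℝ, ℝ) hconv hloc
  exact ⟨q, q.contMDiff.contDiff, (hq a).2.1 rfl, (hq b).2.2 rfl, fun t => (hq t).1⟩

end GappedTuples

section GappedCurve

variable {k : ℕ}

/-- A Lipschitz curve of `k`-tuples whose coordinates are decreasing with gaps at least `δ`, and
which equals `x` up to time `a` and `y` from time `b` on. Freezing the curve outside `[a, b]` makes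
it available at grid points `A / d ≤ a` and `B / d ≥ b` of a discretization. -/
structure IsGappedCurve (H : ℝ → Fin k → ℝ) (K : ℝ≥0) (δ a b : ℝ) (x y : Fin k → ℝ) : Prop where
  lipschitz : LipschitzWith K H
  gap : ∀ t i j, i < j → H t j + δ ≤ H t i
  eq_left : ∀ t ≤ a, H t = x
  eq_right : ∀ t, b ≤ t → H t = y

theorem exists_lipschitzWith_comp_projIcc {E : Type*} [NormedAddCommGroup E]
    [NormedSpace ℝ E] {q : ℝ → E} (hq : ContDiff ℝ 1 q) {a b : ℝ} (hab : a ≤ b) :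
    ∃ K, LipschitzWith K fun t => q (projIcc a b hab t) := by
  obtain ⟨K, hK⟩ := (hq.locallyLipschitz.locallyLipschitzOn
    (s := Icc a b)).exists_lipschitzOnWith_of_compact isCompact_Icc
  exact ⟨_, hK.to_restrict.comp (LipschitzWith.projIcc hab)⟩

theorem exists_isGappedCurve_between {a b : ℝ} (hab : a < b) {f g : ℝ → EReal}
    (hf : LowerSemicontinuousOn f (Icc a b)) (hg : UpperSemicontinuousOn g (Icc a b))
    (hgf : ∀ t ∈ Icc a b, g t < f t) {x y : Fin k → ℝ} (hx : StrictAnti x) (hy : StrictAnti y)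
    (hxfg : ∀ i, (x i : EReal) ∈ Ioo (g a) (f a)) (hyfg : ∀ i, (y i : EReal) ∈ Ioo (g b) (f b)) :
    ∃ (H : ℝ → Fin k → ℝ) (K : ℝ≥0) (δ : ℝ), 0 < δ ∧ IsGappedCurve H K δ a b x y ∧
      ∀ t i, g (projIcc a b hab.le t) ≤ ((H t i - δ : ℝ) : EReal) ∧
        ((H t i + δ : ℝ) : EReal) ≤ f (projIcc a b hab.le t) := by
  obtain ⟨q, hq, hqa, hqb, hqS⟩ := exists_contDiff_forall_mem_gappedTuples
    ((lowerSemicontinuous_restrict_iff.2 hf).comp (continuous_projIcc (h := hab.le)))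
    ((upperSemicontinuousOn_iff_restrict.2 hg).comp (continuous_projIcc (h := hab.le)))
    (fun t => hgf _ (projIcc a b hab.le t).2) hab.ne hx hy (by simpa using hxfg)
    (by simpa using hyfg)
  obtain ⟨K, hK⟩ := exists_lipschitzWith_comp_projIcc (hq.of_le (by simp)) hab.le
  obtain ⟨t₀, -, ht₀⟩ := isCompact_Icc.exists_isMinOn (nonempty_Icc.2 hab.le)
    (hq.continuous.snd.continuousOn (s := Icc a b))
  have hmin (t : ℝ) : (q t₀).2 ≤ (q (projIcc a b hab.le t)).2 := ht₀ (projIcc a b hab.le t).2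
  refine ⟨fun t => (q (projIcc a b hab.le t)).1, K, (q t₀).2, (hqS t₀).1,
    ⟨by simpa [Function.comp_def] using LipschitzWith.prod_fst.comp hK, fun t i j hij => ?_,
      fun t ht => ?_, fun t ht => ?_⟩, fun t i => ?_⟩
  · linarith [(hqS (projIcc a b hab.le t)).2.1 i j hij, hmin t]
  · rw [projIcc_of_le_left hab.le ht, hqa]
  · rw [projIcc_of_right_le hab.le ht, hqb]
  · have hlu := (hqS (projIcc a b hab.le t)).2.2 i
    simp only [Function.comp_apply, projIcc_val, domRestrict_apply] at hlu
    exact ⟨hlu.1.trans (EReal.coe_le_coe_iff.2 (by linarith [hmin t])),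
      (EReal.coe_le_coe_iff.2 (by linarith [hmin t])).trans hlu.2⟩

/-- The map `t ↦ (t - a) / (b - a)` clamped to `[0, 1]`, used to interpolate between endpoint
data. -/
noncomputable def unitRamp (a b t : ℝ) : ℝ :=
  projIcc (0 : ℝ) 1 zero_le_one ((t - a) / (b - a))

theorem unitRamp_mem_Icc (a b t : ℝ) : unitRamp a b t ∈ Icc (0 : ℝ) 1 :=
  (projIcc (0 : ℝ) 1 zero_le_one _).2

theorem unitRamp_of_le {a b t : ℝ} (hab : a ≤ b) (ht : t ≤ a) : unitRamp a b t = 0 := by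
  rw [unitRamp, projIcc_of_le_left]
  exact div_nonpos_of_nonpos_of_nonneg (sub_nonpos.2 ht) (sub_nonneg.2 hab)

theorem unitRamp_of_ge {a b t : ℝ} (hab : a < b) (ht : b ≤ t) : unitRamp a b t = 1 := by
  rw [unitRamp, projIcc_of_right_le]
  exact (one_le_div (sub_pos.2 hab)).2 (by linarith)

theorem lipschitzWith_unitRamp (a b : ℝ) : LipschitzWith ‖(b - a)⁻¹‖₊ (unitRamp a b) := by
  have haffine : LipschitzWith ‖(b - a)⁻¹‖₊ fun t => (t - a) / (b - a) :=
    LipschitzWith.of_dist_le_mul fun s t => by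
      rw [Real.dist_eq, Real.dist_eq, ← sub_div, sub_sub_sub_cancel_right, div_eq_inv_mul, abs_mul,
        coe_nnnorm, Real.norm_eq_abs]
  have hclamp := (LipschitzWith.subtype_val _).comp
    ((LipschitzWith.projIcc (zero_le_one' ℝ)).comp haffine)
  rwa [one_mul, one_mul] at hclamp

theorem IsGappedCurve.exists_near {H : ℝ → Fin k → ℝ} {K η : ℝ≥0} {δ a b : ℝ}
    {x y x' y' : Fin k → ℝ} (hH : IsGappedCurve H K δ a b x y) (hab : a < b)
    (hx : dist x' x ≤ η) (hy : dist y' y ≤ η) :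
    ∃ H', IsGappedCurve H' (K + 2 * η * ‖(b - a)⁻¹‖₊) (δ - 2 * η) a b x' y' ∧
      ∀ t i, |H' t i - H t i| ≤ η := by
  let e (t : ℝ) : Fin k → ℝ := AffineMap.lineMap (x' - x) (y' - y) (unitRamp a b t)
  have hα : x' - x ∈ Metric.closedBall (0 : Fin k → ℝ) η := by simpa [← dist_eq_norm] using hx
  have hβ : y' - y ∈ Metric.closedBall (0 : Fin k → ℝ) η := by simpa [← dist_eq_norm] using hy
  have he (t : ℝ) (i : Fin k) : |e t i| ≤ η :=
    (norm_le_pi_norm (e t) i).trans <| mem_closedBall_zero_iff.1 <|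
      (convex_closedBall 0 _).lineMap_mem hα hβ (unitRamp_mem_Icc a b t)
  have hlip : LipschitzWith (2 * η * ‖(b - a)⁻¹‖₊) e :=
    ((lipschitzWith_lineMap (x' - x) (y' - y)).comp (lipschitzWith_unitRamp a b)).weaken <| by
      gcongr
      rw [← NNReal.coe_le_coe, coe_nndist, two_mul, NNReal.coe_add]
      exact (dist_triangle_right _ _ 0).trans (add_le_add hα hβ)
  refine ⟨fun t => H t + e t, ⟨hH.lipschitz.add hlip, fun t i j hij => ?_, fun t ht => ?_,
    fun t ht => ?_⟩, fun t i => ?_⟩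
  · simp only [Pi.add_apply]
    linarith [hH.gap t i j hij, (abs_le.1 (he t i)).1, (abs_le.1 (he t j)).2]
  · simp [e, hH.eq_left t ht, unitRamp_of_le hab.le ht]
  · simp [e, hH.eq_right t ht, unitRamp_of_ge hab ht]
  · simpa only [Pi.add_apply, add_sub_cancel_left] using he t i

end GappedCurve

section Discretization

variable {k : ℕ}

/-- Taking integer parts is monotone, so only the comparison with the lower barrier needs a
margin. -/
theorem omegaInter_nonempty_of_real_paths {A B : ℤ} (hAB : A ≤ B) {X Y : Fin k → ℤ}
    {f g : ℤ → EReal} {q : ℤ → Fin k → ℝ} (hA : ∀ i, q A i = X i) (hB : ∀ i, q B i = Y i)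
    (hmono : ∀ r ∈ Ico A B, ∀ i, q r i ≤ q (r + 1) i)
    (hinter : ∀ r ∈ Ico A B, ∀ i j : Fin k, (j : ℕ) = i + 1 → q (r + 1) j ≤ q r i)
    (hf : ∀ r ∈ Ico A B, ∀ i : Fin k, (i : ℕ) = 0 → (q (r + 1) i : EReal) ≤ f r)
    (hg : ∀ r ∈ Ico A B, ∀ i : Fin k, (i : ℕ) = k - 1 → g (r + 1) ≤ ((q r i - 1 : ℝ) : EReal)) :
    (OmegaInter A B X Y f g).Nonempty := by
  have hproj (r : ℤ) (hr : r ∈ Icc A B) : (projIcc A B hAB r : ℤ) = r := by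
    rw [projIcc_of_mem hAB hr]
  refine ⟨fun i r => ⌊q (projIcc A B hAB r) i⌋, fun i => ⟨fun r hAr hrB => ?_, fun r hr => ?_,
    fun r hr => ?_⟩, fun i => ?_, fun i => ?_, fun r hAr hrB => ?_⟩
  · simp only [hproj r ⟨hAr, hrB.le⟩, hproj (r + 1) ⟨by lia, hrB⟩]
    exact Int.floor_le_floor (hmono r ⟨hAr, hrB⟩ i)
  · simp only [projIcc_of_le_left hAB hr, projIcc_left]
  · simp only [projIcc_of_right_le hAB hr, projIcc_right]
  · simp only [projIcc_left, hA, Int.floor_intCast]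
  · simp only [projIcc_right, hB, Int.floor_intCast]
  · obtain ⟨r, rfl⟩ : ∃ s, r = s + 1 := ⟨r - 1, by ring⟩
    have hr : r ∈ Ico A B := ⟨by lia, by lia⟩
    simp only [hproj (r + 1) ⟨hAr.le, hrB⟩, add_sub_cancel_right, hproj r ⟨hr.1, hr.2.le⟩]
    refine ⟨fun i hi => ?_, fun i j hij => Int.floor_le_floor (hinter r hr i j hij), fun i hi => ?_⟩
    · exact (EReal.coe_le_coe_iff.2 (Int.floor_le _)).trans (hf r hr i hi)
    · exact (hg r hr i hi).trans (EReal.coe_le_coe_iff.2 (Int.sub_one_lt_floor _).le)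

theorem coe_mul_add_le_of_coe_le {S c e : ℝ} {u : EReal} (hS : 0 ≤ S) (h : (c : EReal) ≤ u) :
    ((S * c + e : ℝ) : EReal) ≤ S * u + e := by
  push_cast
  gcongr

theorem le_coe_mul_add_of_le_coe {S c e : ℝ} {u : EReal} (hS : 0 ≤ S) (h : u ≤ (c : EReal)) :
    S * u + e ≤ ((S * c + e : ℝ) : EReal) := by
  push_cast
  gcongr

theorem IsGappedCurve.abs_apply_succ_div_sub_le {H : ℝ → Fin k → ℝ} {K : ℝ≥0} {δ a b : ℝ}
    {x y : Fin k → ℝ} (hH : IsGappedCurve H K δ a b x y) {d : ℝ} (hd : 0 < d) (r : ℤ) (i : Fin k) :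
    |H ((r + 1 : ℤ) / d) i - H (r / d) i| ≤ K / d := by
  calc |H ((r + 1 : ℤ) / d) i - H (r / d) i|
      ≤ K * dist (((r + 1 : ℤ) : ℝ) / d) (r / d) :=
        (dist_le_pi_dist (H _) (H _) i).trans (hH.lipschitz.dist_le_mul _ _)
    _ = K / d := by
        rw [Real.dist_eq, ← sub_div, Int.cast_add, Int.cast_one, add_sub_cancel_left,
          abs_of_pos (one_div_pos.2 hd), mul_one_div]

/-- Adding the drift `p` to a curve of slope at most `p` gives increments in `[0, 2 p]`, which the
scaled gap `S * δ` absorbs. -/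
theorem IsGappedCurve.omegaInter_nonempty {H : ℝ → Fin k → ℝ} {K : ℝ≥0} {δ a b : ℝ}
    {x y : Fin k → ℝ} (hH : IsGappedCurve H K δ a b x y) {A B : ℤ} {d S p : ℝ} (hd : 0 < d)
    (hS : 0 ≤ S) (hAB : A ≤ B) (ha : A / d ≤ a) (hb : b ≤ B / d) {X Y : Fin k → ℤ}
    (hX : ∀ i, S * x i + p * A = X i) (hY : ∀ i, S * y i + p * B = Y i)
    (hslope : S * (K / d) ≤ p) (hgap : 2 * p + 1 ≤ S * δ) {f g : ℤ → EReal}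
    (hf : ∀ r ∈ Ico A B, ∀ i, ((H (r / d) i + δ : ℝ) : EReal) ≤ f r)
    (hg : ∀ r ∈ Ioc A B, ∀ i, g r ≤ ((H (r / d) i - δ : ℝ) : EReal)) :
    (OmegaInter A B X Y (fun r => (S : EReal) * f r + ((p * r : ℝ) : EReal))
      (fun r => (S : EReal) * g r + ((p * r : ℝ) : EReal))).Nonempty := by
  let q (r : ℤ) (i : Fin k) : ℝ := S * H (r / d) i + p * r
  have hincr (r : ℤ) (i : Fin k) : q (r + 1) i - q r i ∈ Icc 0 (2 * p) := by
    have hstep : |S * (H ((r + 1 : ℤ) / d) i - H (r / d) i)| ≤ p := by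
      rw [abs_mul, abs_of_nonneg hS]
      exact (mul_le_mul_of_nonneg_left (hH.abs_apply_succ_div_sub_le hd r i) hS).trans hslope
    have hsplit : q (r + 1) i - q r i = S * (H ((r + 1 : ℤ) / d) i - H (r / d) i) + p := by
      simp only [q, Int.cast_add, Int.cast_one]
      ring
    rw [hsplit]
    exact ⟨by linarith [(abs_le.1 hstep).1], by linarith [(abs_le.1 hstep).2]⟩
  refine omegaInter_nonempty_of_real_paths (q := q) hAB (fun i => ?_) (fun i => ?_)
    (fun r _ i => sub_nonneg.1 (hincr r i).1) (fun r _ i j hij => ?_) (fun r hr i _ => ?_)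
    (fun r hr i _ => ?_)
  · simp only [q, hH.eq_left _ ha, hX]
  · simp only [q, hH.eq_right _ hb, hY]
  · have hij' := mul_le_mul_of_nonneg_left (hH.gap (r / d) i j (Fin.lt_def.2 (by lia))) hS
    have : q r j + S * δ ≤ q r i := by linarith
    linarith [(hincr r j).2]
  · refine le_trans (EReal.coe_le_coe_iff.2 ?_) (coe_mul_add_le_of_coe_le hS (hf r hr i))
    have : S * (H (r / d) i + δ) + p * r = q r i + S * δ := by ring
    linarith [(hincr r i).2]
  · have hr' : r + 1 ∈ Ioc A B := ⟨Int.lt_add_one_of_le hr.1, hr.2⟩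
    refine (le_coe_mul_add_of_le_coe hS (hg _ hr' i)).trans (EReal.coe_le_coe_iff.2 ?_)
    have : S * (H ((r + 1 : ℤ) / d) i - δ) + p * (r + 1 : ℤ) = q (r + 1) i - S * δ := by ring
    linarith [(hincr r i).2]

theorem IsGappedCurve.omegaInter_nonempty_of_near {H : ℝ → Fin k → ℝ} {K η : ℝ≥0} {δ a b : ℝ}
    {x y : Fin k → ℝ} (hH : IsGappedCurve H K δ a b x y) (hab : a < b) {A B : ℤ} {d S p : ℝ}
    (hd : 0 < d) (hS : 0 < S) (ha : A / d ≤ a) (hb : b ≤ B / d) {X Y : Fin k → ℤ}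
    (hX : dist (fun i => S⁻¹ * (X i - p * A)) x ≤ η)
    (hY : dist (fun i => S⁻¹ * (Y i - p * B)) y ≤ η)
    (hslope : S * ((K + 2 * η * ‖(b - a)⁻¹‖₊ : ℝ≥0) / d) ≤ p)
    (hgap : 2 * p + 1 ≤ S * (δ - 2 * η)) {f g : ℤ → EReal}
    (hf : ∀ r ∈ Ico A B, ∀ i, ((H (r / d) i + δ : ℝ) : EReal) ≤ f r + (η : ℝ))
    (hg : ∀ r ∈ Ioc A B, ∀ i, g r ≤ ((H (r / d) i - δ : ℝ) : EReal) + (η : ℝ)) :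
    (OmegaInter A B X Y (fun r => (S : EReal) * f r + ((p * r : ℝ) : EReal))
      (fun r => (S : EReal) * g r + ((p * r : ℝ) : EReal))).Nonempty := by
  obtain ⟨H', hH', hnear⟩ := hH.exists_near hab hX hY
  have hAB : A ≤ B := by
    have : (A : ℝ) / d < B / d := ha.trans_lt (hab.trans_le hb)
    exact_mod_cast ((div_lt_div_iff_of_pos_right hd).1 this).le
  refine hH'.omegaInter_nonempty hd hS.le hAB ha hb (fun i => ?_) (fun i => ?_) hslope hgap
    (fun r hr i => ?_) (fun r hr i => ?_)
  · rw [mul_inv_cancel_left₀ hS.ne', sub_add_cancel]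
  · rw [mul_inv_cancel_left₀ hS.ne', sub_add_cancel]
  · have := (abs_le.1 (hnear (r / d) i)).2
    calc ((H' (r / d) i + (δ - 2 * η) : ℝ) : EReal)
        ≤ ((H (r / d) i + δ : ℝ) : EReal) - (η : ℝ) := by
          rw [← EReal.coe_sub]
          exact EReal.coe_le_coe_iff.2 (by linarith)
      _ ≤ f r := EReal.sub_le_of_le_add (hf r hr i)
  · have := (abs_le.1 (hnear (r / d) i)).1
    refine (hg r hr i).trans ?_
    rw [← EReal.coe_add]
    exact EReal.coe_le_coe_iff.2 (by linarith)

end Discretization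

section Grid

variable {a b d : ℝ}

theorem floor_mul_div_le (a : ℝ) (hd : 0 < d) : (⌊a * d⌋ : ℝ) / d ≤ a :=
  (div_le_iff₀ hd).2 (Int.floor_le _)

theorem le_ceil_mul_div (b : ℝ) (hd : 0 < d) : b ≤ (⌈b * d⌉ : ℝ) / d :=
  (le_div_iff₀ hd).2 (Int.le_ceil _)

theorem coe_projIcc_floor_mul_div (hd : 0 < d) (hab : a ≤ b) :
    (projIcc a b hab (⌊a * d⌋ / d) : ℝ) = a := by
  rw [projIcc_of_le_left hab (floor_mul_div_le a hd)]

theorem coe_projIcc_ceil_mul_div (hd : 0 < d) (hab : a ≤ b) :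
    (projIcc a b hab (⌈b * d⌉ / d) : ℝ) = b := by
  rw [projIcc_of_right_le hab (le_ceil_mul_div b hd)]

theorem insert_floor_mul_div_subset (hd : 0 < d) (hab : a ≤ b) :
    insert ((⌊a * d⌋ : ℝ) / d) (Icc a b) ⊆ Icc ((⌊a * d⌋ : ℝ) / d) ((⌈b * d⌉ : ℝ) / d) :=
  insert_subset
    ⟨le_rfl, (floor_mul_div_le a hd).trans (hab.trans (le_ceil_mul_div b hd))⟩
    (Icc_subset_Icc (floor_mul_div_le a hd) (le_ceil_mul_div b hd))

theorem insert_ceil_mul_div_subset (hd : 0 < d) (hab : a ≤ b) :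
    insert ((⌈b * d⌉ : ℝ) / d) (Icc a b) ⊆ Icc ((⌊a * d⌋ : ℝ) / d) ((⌈b * d⌉ : ℝ) / d) :=
  insert_subset
    ⟨(floor_mul_div_le a hd).trans (hab.trans (le_ceil_mul_div b hd)), le_rfl⟩
    (Icc_subset_Icc (floor_mul_div_le a hd) (le_ceil_mul_div b hd))

theorem div_mem_insert_Icc_of_mem_Ico (hd : 0 < d) {r : ℤ} (hr : r ∈ Ico ⌊a * d⌋ ⌈b * d⌉) :
    (r : ℝ) / d ∈ insert ((⌊a * d⌋ : ℝ) / d) (Icc a b) := by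
  obtain heq | hlt := hr.1.eq_or_lt
  · exact Or.inl (by rw [heq])
  · exact Or.inr ⟨(le_div_iff₀ hd).2 (Int.floor_lt.1 hlt).le,
      (div_le_iff₀ hd).2 (Int.lt_ceil.1 hr.2).le⟩

theorem div_mem_insert_Icc_of_mem_Ioc (hd : 0 < d) {r : ℤ} (hr : r ∈ Ioc ⌊a * d⌋ ⌈b * d⌉) :
    (r : ℝ) / d ∈ insert ((⌈b * d⌉ : ℝ) / d) (Icc a b) := by
  obtain heq | hlt := hr.2.eq_or_lt
  · exact Or.inl (by rw [heq])
  · exact Or.inr ⟨(le_div_iff₀ hd).2 (Int.floor_lt.1 hr.1).le,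
      (div_le_iff₀ hd).2 (Int.lt_ceil.1 hlt).le⟩

end Grid

section Barriers

theorem continuousOn_of_eq_const_or_eq_coe {s : Set ℝ} {f : ℝ → EReal} {c : EReal}
    (hf : (∀ t ∈ s, f t = c) ∨ ∃ F : ℝ → ℝ, ContinuousOn F s ∧ ∀ t ∈ s, f t = (F t : EReal)) :
    ContinuousOn f s := by
  obtain hc | ⟨F, hF, hfF⟩ := hf
  · exact continuousOn_const.congr hc
  · exact (continuous_coe_real_ereal.comp_continuousOn hF).congr hfF

theorem coe_mem_Ioo_of_strictAnti {k : ℕ} {x : Fin k → ℝ} (hx : StrictAnti x) (hk : 0 < k)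
    {l u : EReal} (hu : (x ⟨0, hk⟩ : EReal) < u)
    (hl : l < (x ⟨k - 1, Nat.sub_lt hk Nat.one_pos⟩ : EReal)) (i : Fin k) :
    (x i : EReal) ∈ Ioo l u :=
  ⟨hl.trans_le (EReal.coe_le_coe_iff.2 (hx.antitone (Fin.le_def.2 (Nat.le_sub_one_of_lt i.2)))),
    (EReal.coe_le_coe_iff.2 (hx.antitone (Fin.le_def.2 (Nat.zero_le i)))).trans_lt hu⟩

theorem le_add_of_abs_toReal_sub_lt {u v : EReal} {ε : ℝ} (hu : u ≠ ⊤) (hv : v ≠ ⊥)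
    (h : |u.toReal - v.toReal| < ε) : u ≤ v + ε :=
  calc u ≤ (u.toReal : EReal) := EReal.le_coe_toReal hu
    _ ≤ (v.toReal : EReal) + ε := by
      rw [← EReal.coe_add, EReal.coe_le_coe_iff]
      linarith [(abs_lt.1 h).2]
    _ ≤ v + ε := by gcongr; exact EReal.coe_toReal_le hv

theorem eventually_abs_sub_projIcc_lt {ι : Type*} {l : Filter ι} {a b : ℝ} (hab : a ≤ b)
    {φ : ℝ → ℝ} {φn : ι → ℝ → ℝ} {c : ι → ℝ} {e : ℝ} (hc : ∀ n, (projIcc a b hab (c n) : ℝ) = e)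
    (hunif : ∀ ε : ℝ, 0 < ε → ∀ᶠ n in l, ∀ t ∈ Icc a b, |φn n t - φ t| < ε)
    (hedge : Tendsto (fun n => |φn n (c n) - φn n e|) l (𝓝 0)) {ε : ℝ} (hε : 0 < ε) :
    ∀ᶠ n in l, ∀ t ∈ insert (c n) (Icc a b), |φn n t - φ (projIcc a b hab t)| < ε := by
  filter_upwards [hunif (ε / 2) (half_pos hε), hedge.eventually_lt_const (half_pos hε)]
    with n hn hcn
  rintro t (rfl | ht)
  · have he : e ∈ Icc a b := hc n ▸ (projIcc a b hab (c n)).2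
    rw [hc]
    linarith [abs_sub_le (φn n (c n)) (φn n e) (φ e), hn e he]
  · rw [projIcc_of_mem hab ht]
    linarith [hn t ht]

theorem eventually_le_add_projIcc {ι : Type*} {l : Filter ι} {a b : ℝ} (hab : a ≤ b)
    {f : ℝ → EReal} {fn : ι → ℝ → EReal} {T : ι → Set ℝ} {c : ι → ℝ} {e : ℝ} {v : EReal}
    (hT : ∀ n, insert (c n) (Icc a b) ⊆ T n) (hc : ∀ n, (projIcc a b hab (c n) : ℝ) = e)
    (hf : (∀ t ∈ Icc a b, f t = v) ∨ ∃ F : ℝ → ℝ, ∀ t ∈ Icc a b, f t = (F t : EReal))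
    (hconst : (∀ t ∈ Icc a b, f t = v) → ∀ᶠ n in l, ∀ t ∈ T n, fn n t = v)
    (hfin : (¬ ∀ t ∈ Icc a b, f t = v) → ∀ᶠ n in l, ∀ t ∈ T n, fn n t ≠ ⊤ ∧ fn n t ≠ ⊥)
    (hunif : (¬ ∀ t ∈ Icc a b, f t = v) →
      ∀ ε : ℝ, 0 < ε → ∀ᶠ n in l, ∀ t ∈ Icc a b, |(fn n t).toReal - (f t).toReal| < ε)
    (hedge : (¬ ∀ t ∈ Icc a b, f t = v) →
      Tendsto (fun n => |(fn n (c n)).toReal - (fn n e).toReal|) l (𝓝 0))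
    (ε : ℝ) (hε : 0 < ε) :
    ∀ᶠ n in l, ∀ t ∈ insert (c n) (Icc a b),
      f (projIcc a b hab t) ≤ fn n t + ε ∧ fn n t ≤ f (projIcc a b hab t) + ε := by
  by_cases h : ∀ t ∈ Icc a b, f t = v
  · filter_upwards [hconst h] with n hn t ht
    rw [hn t (hT n ht), h _ (projIcc a b hab t).2, and_self]
    exact le_add_of_nonneg_right (EReal.coe_nonneg.2 hε.le)
  · obtain ⟨F, hF⟩ := hf.resolve_left h
    have hclose := eventually_abs_sub_projIcc_lt hab (φ := fun t => (f t).toReal)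
      (φn := fun n t => (fn n t).toReal) hc (hunif h) (hedge h) hε
    filter_upwards [hfin h, hclose] with n hfinn hn t ht
    have hft : f (projIcc a b hab t) = (F (projIcc a b hab t) : EReal) :=
      hF _ (projIcc a b hab t).2
    obtain ⟨htop, hbot⟩ := hfinn t (hT n ht)
    refine ⟨le_add_of_abs_toReal_sub_lt (hft ▸ EReal.coe_ne_top _) hbot ?_,
      le_add_of_abs_toReal_sub_lt htop (hft ▸ EReal.coe_ne_bot _) (hn t ht)⟩
    rw [abs_sub_comm]
    exact hn t ht

end Barriers

section Scale

variable {ι : Type*} {l : Filter ι} {d : ι → ℝ}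

theorem tendsto_const_mul_sqrt_atTop {c : ℝ} (hc : 0 < c) (hd : Tendsto d l atTop) :
    Tendsto (fun n => c * √(d n)) l atTop :=
  (Real.tendsto_sqrt_atTop.comp hd).const_mul_atTop hc

theorem tendsto_const_mul_sqrt_div_self (c : ℝ) (hd : Tendsto d l atTop) :
    Tendsto (fun n => c * √(d n) / d n) l (𝓝 0) := by
  simpa only [mul_div_assoc, Real.sqrt_div_self, mul_zero, one_div, Function.comp_def] using
    (tendsto_inv_atTop_zero.comp (Real.tendsto_sqrt_atTop.comp hd)).const_mul c

end Scale

/-- The discrete barriers are compared with `f` and `g` at grid times clamped to `[a, b]`, which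
costs nothing since the curves are constant outside `[a, b]`. -/
theorem omegaInter_nonempty_of_scaling_general {ι : Type*} {l : Filter ι} {k : ℕ} {a b : ℝ}
    (hab : a < b) {x y : Fin k → ℝ} (hx : StrictAnti x) (hy : StrictAnti y) {f g : ℝ → EReal}
    (hf : LowerSemicontinuousOn f (Icc a b)) (hg : UpperSemicontinuousOn g (Icc a b))
    (hgf : ∀ t ∈ Icc a b, g t < f t) (hxfg : ∀ i, (x i : EReal) ∈ Ioo (g a) (f a))
    (hyfg : ∀ i, (y i : EReal) ∈ Ioo (g b) (f b)) {d S : ι → ℝ} (hd : ∀ᶠ n in l, 0 < d n)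
    (hS : Tendsto S l atTop) (hSd : Tendsto (fun n => S n / d n) l (𝓝 0)) {A B : ι → ℤ}
    (hA : ∀ᶠ n in l, A n / d n ≤ a) (hB : ∀ᶠ n in l, b ≤ B n / d n) {p : ℝ} (hp : 0 < p)
    {X Y : ι → Fin k → ℤ} (hX : Tendsto (fun n i => (S n)⁻¹ * (X n i - p * A n)) l (𝓝 x))
    (hY : Tendsto (fun n i => (S n)⁻¹ * (Y n i - p * B n)) l (𝓝 y)) {F G : ι → ℤ → EReal}
    (hF : ∀ ε : ℝ, 0 < ε → ∀ᶠ n in l, ∀ r ∈ Ico (A n) (B n),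
      f (projIcc a b hab.le (r / d n)) ≤ F n r + ε)
    (hG : ∀ ε : ℝ, 0 < ε → ∀ᶠ n in l, ∀ r ∈ Ioc (A n) (B n),
      G n r ≤ g (projIcc a b hab.le (r / d n)) + ε) :
    ∀ᶠ n in l, (OmegaInter (A n) (B n) (X n) (Y n)
      (fun r => (S n : EReal) * F n r + ((p * r : ℝ) : EReal))
      (fun r => (S n : EReal) * G n r + ((p * r : ℝ) : EReal))).Nonempty := by
  obtain ⟨H, K, δ, hδ, hH, hHfg⟩ := exists_isGappedCurve_between hab hf hg hgf hx hy hxfg hyfg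
  obtain ⟨η, hη⟩ : ∃ η : ℝ≥0, (η : ℝ) = δ / 4 := ⟨⟨δ / 4, by positivity⟩, rfl⟩
  have hη₀ : (0 : ℝ) < η := by rw [hη]; positivity
  have hslope : ∀ᶠ n in l, S n * ((K + 2 * η * ‖(b - a)⁻¹‖₊ : ℝ≥0) / d n) ≤ p := by
    refine Tendsto.eventually_le_const (v := 0) hp ?_
    simpa only [zero_mul, div_mul_eq_mul_div, mul_div_assoc] using
      hSd.mul_const ((K + 2 * η * ‖(b - a)⁻¹‖₊ : ℝ≥0) : ℝ)
  have hgap : ∀ᶠ n in l, 2 * p + 1 ≤ S n * (δ - 2 * η) :=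
    (hS.atTop_mul_const (by linarith)).eventually_ge_atTop _
  filter_upwards [hd, hA, hB, hS.eventually_gt_atTop 0,
    hX.eventually (Metric.closedBall_mem_nhds x hη₀),
    hY.eventually (Metric.closedBall_mem_nhds y hη₀), hslope, hgap, hF η hη₀, hG η hη₀]
    with n hdn hAn hBn hSn hXn hYn hslopen hgapn hFn hGn
  exact hH.omegaInter_nonempty_of_near hab hdn hSn hAn hBn hXn hYn hslopen hgapn
    (fun r hr i => (hHfg _ i).2.trans (hFn r hr))
    (fun r hr i => (hGn r hr).trans (add_le_add_left (hHfg _ i).1 _))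

/-- (Lemma 2.9, part 1.) Under the diffusive scaling setup, the interlacing sets
`Ω_Inter(A_n, B_n, X⃗ⁿ, Y⃗ⁿ, F_n, G_n)` are nonempty for all large `n`. -/
theorem omegaInter_nonempty_of_scaling
    (k : ℕ) (hk : 0 < k) (a b : ℝ) (hab : a < b)
    (x y : Fin k → ℝ)
    (hx : ∀ i j : Fin k, i < j → x j < x i) (hy : ∀ i j : Fin k, i < j → y j < y i)
    (f g : ℝ → EReal)
    (hf : (∀ t ∈ Set.Icc a b, f t = ⊤) ∨
      ∃ F : ℝ → ℝ, ContinuousOn F (Set.Icc a b) ∧ ∀ t ∈ Set.Icc a b, f t = (F t : EReal))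
    (hg : (∀ t ∈ Set.Icc a b, g t = ⊥) ∨
      ∃ G : ℝ → ℝ, ContinuousOn G (Set.Icc a b) ∧ ∀ t ∈ Set.Icc a b, g t = (G t : EReal))
    (hfg : ∀ t ∈ Set.Icc a b, g t < f t)
    (hfa : ((x ⟨0, hk⟩ : ℝ) : EReal) < f a) (hfb : ((y ⟨0, hk⟩ : ℝ) : EReal) < f b)
    (hga : g a < ((x ⟨k - 1, Nat.sub_lt hk Nat.one_pos⟩ : ℝ) : EReal))
    (hgb : g b < ((y ⟨k - 1, Nat.sub_lt hk Nat.one_pos⟩ : ℝ) : EReal))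
    (d : ℕ → ℝ) (hd : ∀ n, 0 < d n) (hdtop : Tendsto d atTop atTop)
    (fn gn : ℕ → ℝ → EReal)
    (hfncont : ∀ n, ContinuousOn (fn n)
      (Set.Icc ((⌊a * d n⌋ : ℝ) / d n) ((⌈b * d n⌉ : ℝ) / d n)))
    (hfnbot : ∀ n, ∀ t ∈ Set.Icc ((⌊a * d n⌋ : ℝ) / d n) ((⌈b * d n⌉ : ℝ) / d n),
      fn n t ≠ ⊥)
    (hgncont : ∀ n, ContinuousOn (gn n)
      (Set.Icc ((⌊a * d n⌋ : ℝ) / d n) ((⌈b * d n⌉ : ℝ) / d n)))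
    (hgntop : ∀ n, ∀ t ∈ Set.Icc ((⌊a * d n⌋ : ℝ) / d n) ((⌈b * d n⌉ : ℝ) / d n),
      gn n t ≠ ⊤)
    (hfconvTop : (∀ t ∈ Set.Icc a b, f t = ⊤) → ∀ᶠ n in atTop,
      ∀ t ∈ Set.Icc ((⌊a * d n⌋ : ℝ) / d n) ((⌈b * d n⌉ : ℝ) / d n), fn n t = ⊤)
    (hfconvReal : (¬ ∀ t ∈ Set.Icc a b, f t = ⊤) →
      (∀ᶠ n in atTop,
        ∀ t ∈ Set.Icc ((⌊a * d n⌋ : ℝ) / d n) ((⌈b * d n⌉ : ℝ) / d n), fn n t ≠ ⊤) ∧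
      ∀ ε : ℝ, 0 < ε → ∀ᶠ n in atTop, ∀ t ∈ Set.Icc a b,
        |(fn n t).toReal - (f t).toReal| < ε)
    (hgconvBot : (∀ t ∈ Set.Icc a b, g t = ⊥) → ∀ᶠ n in atTop,
      ∀ t ∈ Set.Icc ((⌊a * d n⌋ : ℝ) / d n) ((⌈b * d n⌉ : ℝ) / d n), gn n t = ⊥)
    (hgconvReal : (¬ ∀ t ∈ Set.Icc a b, g t = ⊥) →
      (∀ᶠ n in atTop,
        ∀ t ∈ Set.Icc ((⌊a * d n⌋ : ℝ) / d n) ((⌈b * d n⌉ : ℝ) / d n), gn n t ≠ ⊥) ∧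
      ∀ ε : ℝ, 0 < ε → ∀ᶠ n in atTop, ∀ t ∈ Set.Icc a b,
        |(gn n t).toReal - (g t).toReal| < ε)
    (hedgef : (¬ ∀ t ∈ Set.Icc a b, f t = ⊤) →
      Tendsto (fun n => |(fn n ((⌊a * d n⌋ : ℝ) / d n)).toReal - (fn n a).toReal|)
        atTop (𝓝 0))
    (hedgeg : (¬ ∀ t ∈ Set.Icc a b, g t = ⊥) →
      Tendsto (fun n => |(gn n ((⌈b * d n⌉ : ℝ) / d n)).toReal - (gn n b).toReal|)
        atTop (𝓝 0))
    (p : ℝ) (hp : 0 < p)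
    (X Y : ℕ → Fin k → ℤ)
    (hXW : ∀ n, ∀ i j : Fin k, i ≤ j → X n j ≤ X n i)
    (hYW : ∀ n, ∀ i j : Fin k, i ≤ j → Y n j ≤ Y n i)
    (hXlim : ∀ i, Tendsto (fun n => (Real.sqrt (p * (1 + p)))⁻¹ * (Real.sqrt (d n))⁻¹ *
      ((X n i : ℝ) - p * ⌊a * d n⌋)) atTop (𝓝 (x i)))
    (hYlim : ∀ i, Tendsto (fun n => (Real.sqrt (p * (1 + p)))⁻¹ * (Real.sqrt (d n))⁻¹ *
      ((Y n i : ℝ) - p * ⌈b * d n⌉)) atTop (𝓝 (y i)))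
    :
    ∃ N0 : ℕ, ∀ n : ℕ, N0 ≤ n →
      (OmegaInter ⌊a * d n⌋ ⌈b * d n⌉ (X n) (Y n)
        (fun t : ℤ => ((Real.sqrt (p * (1 + p)) * Real.sqrt (d n) : ℝ) : EReal) *
            fn n ((t : ℝ) / d n) + ((p * (t : ℝ) : ℝ) : EReal))
        (fun t : ℤ => ((Real.sqrt (p * (1 + p)) * Real.sqrt (d n) : ℝ) : EReal) *
            gn n ((t : ℝ) / d n) + ((p * (t : ℝ) : ℝ) : EReal))).Nonempty := by
  have hσ : 0 < √(p * (1 + p)) := Real.sqrt_pos.2 (by positivity)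
  have hf_near := eventually_le_add_projIcc hab.le
    (fun n => insert_floor_mul_div_subset (hd n) hab.le)
    (fun n => coe_projIcc_floor_mul_div (hd n) hab.le) (hf.imp_right fun ⟨F, _, hF⟩ => ⟨F, hF⟩)
    hfconvTop (fun h => (hfconvReal h).1.mono fun n hn t ht => ⟨hn t ht, hfnbot n t ht⟩)
    (fun h => (hfconvReal h).2) hedgef
  have hg_near := eventually_le_add_projIcc hab.le
    (fun n => insert_ceil_mul_div_subset (hd n) hab.le)
    (fun n => coe_projIcc_ceil_mul_div (hd n) hab.le) (hg.imp_right fun ⟨G, _, hG⟩ => ⟨G, hG⟩)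
    hgconvBot (fun h => (hgconvReal h).1.mono fun n hn t ht => ⟨hgntop n t ht, hn t ht⟩)
    (fun h => (hgconvReal h).2) hedgeg
  exact eventually_atTop.1 <| omegaInter_nonempty_of_scaling_general hab hx hy
    (continuousOn_of_eq_const_or_eq_coe hf).lowerSemicontinuousOn
    (continuousOn_of_eq_const_or_eq_coe hg).upperSemicontinuousOn hfg
    (coe_mem_Ioo_of_strictAnti hx hk hfa hga) (coe_mem_Ioo_of_strictAnti hy hk hfb hgb)
    (.of_forall hd) (tendsto_const_mul_sqrt_atTop hσ hdtop)
    (tendsto_const_mul_sqrt_div_self _ hdtop) (.of_forall fun n => floor_mul_div_le a (hd n))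
    (.of_forall fun n => le_ceil_mul_div b (hd n)) hp
    (tendsto_pi_nhds.2 fun i => by simpa only [mul_inv] using hXlim i)
    (tendsto_pi_nhds.2 fun i => by simpa only [mul_inv] using hYlim i)
    (fun ε hε => (hf_near ε hε).mono fun n hn r hr =>
      (hn _ (div_mem_insert_Icc_of_mem_Ico (hd n) hr)).1)
    (fun ε hε => (hg_near ε hε).mono fun n hn r hr =>
      (hn _ (div_mem_insert_Icc_of_mem_Ioc (hd n) hr)).2)
end

section
/- (Lemma 3.1, no concentration in the bulk.) Fix p, η, M ∈ (0,∞) and δ1 ∈ (0,1/2). There exist N1 ∈ ℕ and δ > 0, depending on p, η, M, δ1, such that the following holds: for every integer n ≥ N1, all x, y ∈ ℤ with x ≤ y, |x| ≤ M·n^{1/2} and |y − p·n| ≤ M·n^{1/2}, every t ∈ [δ1, 1−δ1], and every a ∈ ℝ, if Q is a random increasing path with law P_Geom^{0,n,x,y} (extended to [0,n] by linear interpolation), then P(n^{-1/2}·(Q(t·n) − p·t·n) ∈ [a−δ, a+δ]) < η. -/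
open MeasureTheory Filter Topology ProbabilityTheory
open scoped ENNReal NNReal

/-- Linear interpolation of a real-valued function defined on `ℤ`. -/
noncomputable def interp (f : ℤ → ℝ) (t : ℝ) : ℝ :=
  f ⌊t⌋ + (t - ⌊t⌋) * (f (⌊t⌋ + 1) - f ⌊t⌋)

/-- Linear interpolation of an integer-valued function on `ℤ`. -/
noncomputable def interpZ (L : ℤ → ℤ) : ℝ → ℝ :=
  interp fun s => (L s : ℝ)

lemma interp_eq_on (f : ℤ → ℝ) (n : ℤ) :
    ∀ t ∈ Set.Icc (n : ℝ) ((n : ℝ) + 1),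
      interp f t = f n + (t - n) * (f (n + 1) - f n) := by
  intro t ht
  rcases lt_or_eq_of_le ht.2 with h | h
  · have hfl : ⌊t⌋ = n := by
      rw [Int.floor_eq_iff]
      · exact ⟨ht.1, by exact_mod_cast h⟩
    simp [interp, hfl]
  · have hfl : ⌊t⌋ = n + 1 := by
      rw [h, show ((n : ℝ) + 1) = ((n + 1 : ℤ) : ℝ) by push_cast; ring, Int.floor_intCast]
    rw [interp, hfl, h]
    push_cast
    ring

lemma continuous_interp (f : ℤ → ℝ) : Continuous (interp f) := by
  have hcov : (⋃ n : ℤ, Set.Icc (n : ℝ) ((n : ℝ) + 1)) = Set.univ := by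
    ext t
    simp only [Set.mem_iUnion, Set.mem_univ, iff_true, Set.mem_Icc]
    exact ⟨⌊t⌋, Int.floor_le t, (Int.lt_floor_add_one t).le⟩
  have hlf : LocallyFinite fun n : ℤ => Set.Icc (n : ℝ) ((n : ℝ) + 1) := by
    intro x
    refine ⟨Set.Ioo (x - 1) (x + 1), Ioo_mem_nhds (by linarith) (by linarith), ?_⟩
    apply Set.Finite.subset (Set.finite_Icc (⌊x⌋ - 2) (⌊x⌋ + 2))
    rintro n ⟨t, ht1, ht2⟩
    simp only [Set.mem_Icc] at ht1 ⊢
    simp only [Set.mem_Ioo] at ht2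
    constructor
    · have h1 : ((⌊x⌋ - 2 : ℤ) : ℝ) < n := by
        push_cast
        have := Int.floor_le x
        linarith [ht1.2, ht2.1]
      exact_mod_cast h1.le
    · have h2 : (n : ℝ) < ((⌊x⌋ + 2 : ℤ) : ℝ) := by
        push_cast
        have := Int.lt_floor_add_one x
        linarith [ht1.1, ht2.2]
      exact_mod_cast h2.le
  refine hlf.continuous hcov (fun n => isClosed_Icc) (fun n => ?_)
  have hc : ContinuousOn (fun t : ℝ => f n + (t - n) * (f (n + 1) - f n))
      (Set.Icc (n : ℝ) ((n : ℝ) + 1)) := (by continuity : Continuous _).continuousOn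
  exact hc.congr (interp_eq_on f n)

/-- The random variable `X` is uniformly distributed on the (finite) set `S` under `P`. -/
def UniformOn {Ω E : Type*} [MeasurableSpace Ω] (P : Measure Ω) (X : Ω → E)
    (S : Set E) : Prop :=
  (∀ ω, X ω ∈ S) ∧ ∀ Q ∈ S, P {ω | X ω = Q} = ((Nat.card S : ℝ≥0∞))⁻¹

/-!
Cutting a path at an intermediate time shows that paths are counted by `multichoose`. Hence the
probability that the step straddling `t n` starts at height `i` above `x` and has size `m - r`,
where `m = y - x`, is a ratio of such counts.

For fixed `r`, the weights of the heights `i` satisfy a first-order recursion which locates their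
mode `i₀` and shows that they stay above half of the maximum on `≍ √n` heights following `i₀`.
Hence each height carries a fraction `O(1 / √n)` of the total weight. A window of width `2 δ √n`
meets `O(δ √n + 1)` heights, which gives `O(δ + 1 / √n)` after summation over `r`. The values
`r ≤ m / 2`, where a single step covers half of the height, are too small for this bound, but they
only have probability `O(1 / n)`.
-/

section Multichoose

lemma succ_mul_multichoose_succ (k i : ℕ) :
    (i + 1) * k.multichoose (i + 1) = (k + i) * k.multichoose i := by
  cases k with
  | zero => cases i <;> simp
  | succ k =>
    have h := Nat.add_one_mul_choose_eq (k + i) i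
    simp only [Nat.multichoose_eq, show k + 1 + (i + 1) - 1 = k + i + 1 by lia,
      show k + 1 + i - 1 = k + i by lia]
    linarith

lemma mul_multichoose_succ_left (n m : ℕ) :
    n * (n + 1).multichoose m = (n + m) * n.multichoose m := by
  cases n with
  | zero => cases m <;> simp
  | succ k =>
    have h := Nat.choose_mul_succ_eq (k + m) m
    rw [show k + m + 1 - m = k + 1 by lia] at h
    simp only [Nat.multichoose_eq, show k + 1 + 1 + m - 1 = k + m + 1 by lia,
      show k + 1 + m - 1 = k + m by lia]
    linarith

lemma sum_range_multichoose_eq_multichoose_succ (n m : ℕ) :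
    ∑ j ∈ Finset.range (m + 1), n.multichoose j = (n + 1).multichoose m := by
  rw [Nat.sum_range_multichoose, Nat.multichoose_eq, show n + 1 + m - 1 = m + n by lia,
    Nat.choose_symm_add]

lemma monotone_multichoose_succ (n : ℕ) : Monotone (n + 1).multichoose :=
  monotone_nat_of_le_succ fun m => by
    rw [Nat.multichoose_succ_succ]
    exact Nat.le_add_left _ _

lemma multichoose_succ_pos (n m : ℕ) : 0 < (n + 1).multichoose m :=
  (Nat.multichoose_zero_right (n + 1)).symm ▸ Nat.one_pos |>.trans_le
    (monotone_multichoose_succ n m.zero_le)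

lemma mul_sub_mul_multichoose_le (n m j : ℕ) :
    n * ((m - j) * n.multichoose j) ≤ (n + m) * n.multichoose m := by
  cases n with
  | zero => simp
  | succ n =>
    rw [← mul_multichoose_succ_left, ← sum_range_multichoose_eq_multichoose_succ (n + 1) m]
    gcongr
    calc (m - j) * (n + 1).multichoose j
        = ∑ _i ∈ Finset.Ico (j + 1) (m + 1), (n + 1).multichoose j := by simp
      _ ≤ ∑ i ∈ Finset.Ico (j + 1) (m + 1), (n + 1).multichoose i :=
          Finset.sum_le_sum fun i hi =>
            monotone_multichoose_succ n (by have := (Finset.mem_Ico.1 hi).1; lia)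
      _ ≤ ∑ i ∈ Finset.range (m + 1), (n + 1).multichoose i :=
          Finset.sum_le_sum_of_subset fun i hi =>
            Finset.mem_range.2 (Finset.mem_Ico.1 hi).2

end Multichoose

section Paths

variable {T₀ T₁ s t x y u v : ℤ} {L : ℤ → ℤ}

lemma mem_OmegaPath_iff :
    L ∈ OmegaPath T₀ T₁ x y ↔
      Monotone L ∧ (∀ j ≤ T₀, L j = x) ∧ ∀ j, T₁ ≤ j → L j = y := by
  constructor
  · rintro ⟨⟨hstep, hleft, hright⟩, rfl, rfl⟩
    refine ⟨monotone_int_of_le_succ fun j => ?_, hleft, hright⟩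
    rcases lt_or_ge j T₀ with hj | hj
    · rw [hleft j hj.le, hleft (j + 1) hj]
    rcases lt_or_ge j T₁ with hj' | hj'
    · exact hstep j hj hj'
    · rw [hright j hj', hright (j + 1) (by lia)]
  · rintro ⟨hmono, hleft, hright⟩
    refine ⟨⟨fun j _ _ => hmono (by lia), fun j hj => ?_, fun j hj => ?_⟩,
      hleft _ le_rfl, hright _ le_rfl⟩
    · rw [hleft j hj, hleft _ le_rfl]
    · rw [hright j hj, hright _ le_rfl]

lemma restrict_mem_OmegaPath (hL : Monotone L) (hst : s ≤ t) :
    (fun j => L (max s (min j t))) ∈ OmegaPath s t (L s) (L t) :=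
  mem_OmegaPath_iff.2
    ⟨hL.comp fun _ _ h => max_le_max_left s (min_le_min_right t h),
      fun j hj => by rw [min_eq_left (hj.trans hst), max_eq_left hj],
      fun j hj => by rw [min_eq_right hj, max_eq_right hst]⟩

lemma glue_mem_OmegaPath {A B C : ℤ → ℤ} (h₀ : T₀ ≤ s) (hst : s ≤ t) (h₁ : t ≤ T₁)
    (hA : A ∈ OmegaPath T₀ s x u) (hB : B ∈ OmegaPath s t u v) (hC : C ∈ OmegaPath t T₁ v y) :
    (fun j => A j + B j + C j - u - v) ∈ OmegaPath T₀ T₁ x y := by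
  rw [mem_OmegaPath_iff] at hA hB hC
  refine mem_OmegaPath_iff.2 ⟨fun i j hij => ?_, fun j hj => ?_, fun j hj => ?_⟩
  · have := hA.1 hij
    have := hB.1 hij
    have := hC.1 hij
    simp only
    lia
  · rw [hA.2.1 j hj, hB.2.1 j (by lia), hC.2.1 j (by lia)]
    ring
  · rw [hA.2.2 j (by lia), hB.2.2 j (by lia), hC.2.2 j hj]
    ring

-- A path through `(s, u)` and `(t, v)` is the sum of its three pieces, each extended by constants,
-- minus `u + v`.
lemma encard_OmegaPath_through_two (h₀ : T₀ ≤ s) (hst : s ≤ t) (h₁ : t ≤ T₁) :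
    {L ∈ OmegaPath T₀ T₁ x y | L s = u ∧ L t = v}.encard =
      (OmegaPath T₀ s x u).encard * (OmegaPath s t u v).encard *
        (OmegaPath t T₁ v y).encard := by
  rw [← Set.encard_prod, ← Set.encard_prod]
  symm
  refine Set.encard_congr (Set.BijOn.equiv
    (fun p : ((ℤ → ℤ) × (ℤ → ℤ)) × (ℤ → ℤ) => fun j => p.1.1 j + p.1.2 j + p.2 j - u - v)
    (Set.InvOn.bijOn (f' := fun L : ℤ → ℤ => ((fun j => L (max T₀ (min j s)),
      fun j => L (max s (min j t))), fun j => L (max t (min j T₁)))) ⟨?_, ?_⟩ ?_ ?_))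
  · rintro ⟨⟨A, B⟩, C⟩ ⟨⟨hA, hB⟩, hC⟩
    obtain ⟨-, hA₀, hA₁⟩ := mem_OmegaPath_iff.1 hA
    obtain ⟨-, hB₀, hB₁⟩ := mem_OmegaPath_iff.1 hB
    obtain ⟨-, hC₀, hC₁⟩ := mem_OmegaPath_iff.1 hC
    simp only [Prod.mk.injEq]
    refine ⟨⟨funext fun j => ?_, funext fun j => ?_⟩, funext fun j => ?_⟩
    all_goals grind
  · rintro L ⟨hL, hu, hv⟩
    obtain ⟨-, hL₀, hL₁⟩ := mem_OmegaPath_iff.1 hL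
    funext j
    grind
  · rintro ⟨⟨A, B⟩, C⟩ ⟨⟨hA, hB⟩, hC⟩
    refine ⟨glue_mem_OmegaPath h₀ hst h₁ hA hB hC, ?_, ?_⟩
    all_goals
      obtain ⟨-, -, hA₁⟩ := mem_OmegaPath_iff.1 hA
      obtain ⟨-, hB₀, hB₁⟩ := mem_OmegaPath_iff.1 hB
      obtain ⟨-, hC₀, -⟩ := mem_OmegaPath_iff.1 hC
      grind
  · rintro L ⟨hL, rfl, rfl⟩
    obtain ⟨hmono, hL₀, hL₁⟩ := mem_OmegaPath_iff.1 hL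
    refine ⟨⟨?_, ?_⟩, ?_⟩
    · simpa only [hL₀ _ le_rfl] using restrict_mem_OmegaPath hmono h₀
    · exact restrict_mem_OmegaPath hmono hst
    · simpa only [hL₁ _ le_rfl] using restrict_mem_OmegaPath hmono h₁

lemma OmegaPath_self (T x : ℤ) : OmegaPath T T x x = {fun _ => x} := by
  ext L
  rw [mem_OmegaPath_iff, Set.mem_singleton_iff]
  constructor
  · rintro ⟨-, hleft, hright⟩
    exact funext fun j => (le_total j T).elim (hleft j) (hright j)
  · rintro rfl
    exact ⟨monotone_const, fun _ _ => rfl, fun _ _ => rfl⟩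

lemma OmegaPath_add_one (T : ℤ) (hxy : x ≤ y) :
    OmegaPath T (T + 1) x y = {fun j => if j ≤ T then x else y} := by
  ext L
  rw [mem_OmegaPath_iff, Set.mem_singleton_iff]
  constructor
  · rintro ⟨-, hleft, hright⟩
    grind
  · rintro rfl
    refine ⟨fun i j hij => ?_, ?_, ?_⟩ <;> grind

lemma encard_OmegaPath_eq_sum (h₀ : T₀ ≤ s) (h₁ : s ≤ T₁) (x : ℤ) (m : ℕ) :
    (OmegaPath T₀ T₁ x (x + m)).encard =
      ∑ i ∈ Finset.range (m + 1), (OmegaPath T₀ s x (x + i)).encard *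
        (OmegaPath s T₁ (x + i) (x + m)).encard := by
  let S (i : ℕ) : Set (ℤ → ℤ) := {L ∈ OmegaPath T₀ T₁ x (x + m) | L s = x + i ∧ L T₁ = x + m}
  have hcover : OmegaPath T₀ T₁ x (x + m) = ⋃ i ∈ (Finset.range (m + 1) : Set ℕ), S i := by
    refine Set.Subset.antisymm (fun L hL => ?_) (Set.iUnion₂_subset fun i _ => Set.sep_subset _ _)
    obtain ⟨hmono, hleft, hright⟩ := mem_OmegaPath_iff.1 hL
    have hlow := hmono h₀
    have hhigh := hmono h₁
    rw [hleft _ le_rfl] at hlow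
    rw [hright _ le_rfl] at hhigh
    simp only [Set.mem_iUnion, Finset.coe_range, Set.mem_Iio]
    exact ⟨(L s - x).toNat, by lia, hL, by lia, hright _ le_rfl⟩
  have hdisj : (Finset.range (m + 1) : Set ℕ).PairwiseDisjoint S := fun i _ j _ hij =>
    Set.disjoint_left.2 fun L hi hj => hij (by have := hi.2.1; have := hj.2.1; lia)
  rw [hcover, (Finset.finite_toSet _).encard_biUnion hdisj, finsum_mem_coe_finset]
  refine Finset.sum_congr rfl fun i _ => ?_
  rw [encard_OmegaPath_through_two h₀ h₁ le_rfl, OmegaPath_self, Set.encard_singleton, mul_one]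

theorem encard_OmegaPath (T x : ℤ) (n m : ℕ) :
    (OmegaPath T (T + n) x (x + m)).encard = n.multichoose m := by
  induction n generalizing m with
  | zero =>
    cases m with
    | zero => simp [OmegaPath_self]
    | succ m =>
      have : OmegaPath T T x (x + (m + 1)) = ∅ :=
        Set.eq_empty_of_forall_notMem fun L hL => by have := hL.2.1; have := hL.2.2; lia
      simp [this]
  | succ n ih =>
    rw [encard_OmegaPath_eq_sum (s := T + n) (by lia) (by lia),
      ← sum_range_multichoose_eq_multichoose_succ, Nat.cast_sum]
    refine Finset.sum_congr rfl fun i hi => ?_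
    rw [ih, Nat.cast_succ, ← add_assoc,
      OmegaPath_add_one _ (by have := Finset.mem_range.1 hi; lia), Set.encard_singleton, mul_one]

lemma encard_OmegaPath_of_add_eq {n m : ℕ} (hT : T₀ + n = T₁) (hx : x + m = y) :
    (OmegaPath T₀ T₁ x y).encard = n.multichoose m := by
  subst hT hx
  exact encard_OmegaPath T₀ x n m

-- Vandermonde's identity, read off from the height of a path after `k` of its `k + l` steps.
theorem sum_multichoose_mul_multichoose (k l m : ℕ) :
    ∑ i ∈ Finset.range (m + 1), k.multichoose i * l.multichoose (m - i) =
      (k + l).multichoose m := by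
  have h := encard_OmegaPath_eq_sum (T₀ := 0) (s := k) (T₁ := (k + l : ℕ)) (by lia) (by lia) 0 m
  rw [encard_OmegaPath_of_add_eq (n := k + l) (m := m) (by lia) (by lia)] at h
  have key : ((k + l).multichoose m : ℕ∞) =
      ∑ i ∈ Finset.range (m + 1), (k.multichoose i : ℕ∞) * l.multichoose (m - i) := by
    rw [h]
    refine Finset.sum_congr rfl fun i hi => ?_
    have := Finset.mem_range.1 hi
    rw [encard_OmegaPath_of_add_eq (n := k) (m := i) (by lia) (by lia),
      encard_OmegaPath_of_add_eq (n := l) (m := m - i) (by lia) (by lia)]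
  exact_mod_cast key.symm

/-- The terms are indexed by the increments `i` and `r - i` before and after the step from `T + k`
to `T + k + 1`, which itself has size `m - r`. -/
lemma encard_OmegaPath_consecutive_le (p : ℤ → ℤ → Prop) [DecidableRel p] (T x : ℤ)
    (k l m : ℕ) :
    {L ∈ OmegaPath T (T + (k + 1 + l)) x (x + m) | p (L (T + k)) (L (T + k + 1))}.encard ≤
      ∑ r ∈ Finset.range (m + 1),
        ∑ i ∈ (Finset.range (r + 1)).filter fun i : ℕ => p (x + i) (x + i + (m - r)),
          ((k.multichoose i * l.multichoose (r - i) : ℕ) : ℕ∞) := by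
  let S (r i : ℕ) : Set (ℤ → ℤ) := {L ∈ OmegaPath T (T + (k + 1 + l)) x (x + m) |
    L (T + k) = x + i ∧ L (T + k + 1) = x + i + (m - r)}
  have hcover : {L ∈ OmegaPath T (T + (k + 1 + l)) x (x + m) | p (L (T + k)) (L (T + k + 1))} ⊆
      ⋃ r ∈ Finset.range (m + 1),
        ⋃ i ∈ (Finset.range (r + 1)).filter fun i : ℕ => p (x + i) (x + i + (m - r)), S r i := by
    rintro L ⟨hL, hp⟩
    obtain ⟨hmono, hleft, hright⟩ := mem_OmegaPath_iff.1 hL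
    have h₀ : x ≤ L (T + k) := (hleft T le_rfl).symm.trans_le (hmono (by lia))
    have h₁ : L (T + k) ≤ L (T + k + 1) := hmono (by lia)
    have h₂ : L (T + k + 1) ≤ x + m := (hmono (by lia)).trans_eq (hright _ le_rfl)
    obtain ⟨i, hi⟩ := Int.eq_ofNat_of_zero_le (sub_nonneg.2 h₀)
    obtain ⟨r, hr⟩ : ∃ r : ℕ, L (T + k + 1) = x + i + (m - r) :=
      ⟨(x + i + m - L (T + k + 1)).toNat, by lia⟩
    have hi' : L (T + k) = x + i := by lia
    simp only [Set.mem_iUnion, Finset.mem_filter, Finset.mem_range]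
    exact ⟨r, by lia, i, ⟨by lia, by rwa [← hr, ← hi']⟩, hL, hi', hr⟩
  refine (Set.encard_le_encard hcover).trans <| (Finset.set_encard_biUnion_le _ _).trans <|
    Finset.sum_le_sum fun r hr => (Finset.set_encard_biUnion_le _ _).trans <|
    Finset.sum_le_sum fun i hi => ?_
  have := Finset.mem_range.1 hr
  have := Finset.mem_range.1 (Finset.mem_filter.1 hi).1
  rw [encard_OmegaPath_through_two (by lia) (by lia) (by lia),
    encard_OmegaPath_of_add_eq (n := k) (m := i) (by lia) (by lia),
    OmegaPath_add_one _ (by lia), Set.encard_singleton, mul_one,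
    encard_OmegaPath_of_add_eq (n := l) (m := r - i) (by lia) (by lia), Nat.cast_mul]

end Paths

section LocalBound

/-- The number of increasing paths of height `m` with `a + b + 2` steps that are at height `i`
after `a + 1` steps, for `i ≤ m`. The numbers of steps on both sides are shifted by one because
the ratio of consecutive weights is governed by `a` and `b`. -/
def bridgeWeight (a b m i : ℕ) : ℝ :=
  (a + 1).multichoose i * (b + 1).multichoose (m - i)

variable {a b m i₀ r s : ℕ}

lemma bridgeWeight_pos (a b m i : ℕ) : 0 < bridgeWeight a b m i :=
  mul_pos (Nat.cast_pos.2 (multichoose_succ_pos a i))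
    (Nat.cast_pos.2 (multichoose_succ_pos b (m - i)))

lemma sum_bridgeWeight (a b m : ℕ) :
    ∑ i ∈ Finset.range (m + 1), bridgeWeight a b m i = (a + 1 + (b + 1)).multichoose m := by
  rw [← sum_multichoose_mul_multichoose]
  push_cast
  rfl

lemma bridgeWeight_succ_sub_mul (a b : ℕ) {m i : ℕ} (hi : i < m) :
    (bridgeWeight a b m (i + 1) - bridgeWeight a b m i) * ((i + 1) * (b + m - i)) =
      bridgeWeight a b m i * (a * (m + 1) - (i + 1) * (a + b)) := by
  obtain ⟨j, rfl⟩ := Nat.exists_eq_add_of_lt hi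
  have hleft : ((i : ℝ) + 1) * (a + 1).multichoose (i + 1) =
      (a + 1 + i) * (a + 1).multichoose i := mod_cast succ_mul_multichoose_succ (a + 1) i
  have hright : ((j : ℝ) + 1) * (b + 1).multichoose (j + 1) =
      (b + 1 + j) * (b + 1).multichoose j := mod_cast succ_mul_multichoose_succ (b + 1) j
  simp only [bridgeWeight, show i + j + 1 - (i + 1) = j by lia,
    show i + j + 1 - i = j + 1 by lia]
  push_cast
  linear_combination (b + 1 + j) * ((b + 1).multichoose j : ℝ) * hleft -
    (a + 1 + i) * ((a + 1).multichoose i : ℝ) * hright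

lemma mode_mul_le (hi₀ : i₀ ≤ m)
    (hmax : ∀ j ≤ m, bridgeWeight a b m j ≤ bridgeWeight a b m i₀) :
    (i₀ : ℝ) * (a + b) ≤ a * (m + 1) := by
  cases i₀ with
  | zero => simp only [Nat.cast_zero, zero_mul]; positivity
  | succ j =>
    have hjm : (j : ℝ) + 1 ≤ m := mod_cast hi₀
    have hnonneg : 0 ≤ bridgeWeight a b m j * (a * (m + 1) - (j + 1) * (a + b)) := by
      rw [← bridgeWeight_succ_sub_mul a b hi₀]
      exact mul_nonneg (sub_nonneg.2 (hmax j (by lia)))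
        (mul_nonneg (by positivity) (by linarith [b.cast_nonneg (α := ℝ)]))
    have := nonneg_of_mul_nonneg_right hnonneg (bridgeWeight_pos a b m j)
    push_cast
    linarith

lemma le_mode_succ_mul (hi₀ : i₀ ≤ m)
    (hmax : ∀ j ≤ m, bridgeWeight a b m j ≤ bridgeWeight a b m i₀) :
    (a : ℝ) * (m + 1) ≤ (i₀ + 1) * (a + b) := by
  rcases hi₀.eq_or_lt with rfl | hlt
  · nlinarith [mul_nonneg (b.cast_nonneg (α := ℝ)) (i₀.cast_nonneg (α := ℝ)),
      b.cast_nonneg (α := ℝ)]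
  · have hlt' : (i₀ : ℝ) < m := mod_cast hlt
    have hnonpos : bridgeWeight a b m i₀ * (a * (m + 1) - (i₀ + 1) * (a + b)) ≤ 0 := by
      rw [← bridgeWeight_succ_sub_mul a b hlt]
      exact mul_nonpos_of_nonpos_of_nonneg (sub_nonpos.2 (hmax _ hlt))
        (mul_nonneg (by positivity) (by linarith [b.cast_nonneg (α := ℝ)]))
    linarith [nonpos_of_mul_nonpos_right hnonpos (bridgeWeight_pos a b m i₀)]

lemma bridgeWeight_sub_succ_mul_le (hi₀ : i₀ ≤ m)
    (hmax : ∀ j ≤ m, bridgeWeight a b m j ≤ bridgeWeight a b m i₀) (hs : i₀ + s < m) :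
    (bridgeWeight a b m (i₀ + s) - bridgeWeight a b m (i₀ + s + 1)) * (a * b * (m + 1)) ≤
      bridgeWeight a b m i₀ * ((s + 1) * (a + b) ^ 2) := by
  set f := bridgeWeight a b m
  rcases le_total (f (i₀ + s) - f (i₀ + s + 1)) 0 with hneg | hpos
  · exact (mul_nonpos_of_nonpos_of_nonneg hneg (by positivity)).trans
      (mul_nonneg (bridgeWeight_pos a b m i₀).le (by positivity))
  have hsm : (i₀ : ℝ) + s + 1 ≤ m := mod_cast hs
  have hdecrease : (f (i₀ + s) - f (i₀ + s + 1)) * ((i₀ + s + 1) * (b + m - (i₀ + s))) =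
      f (i₀ + s) * ((i₀ + s + 1) * (a + b) - a * (m + 1)) := by
    have := bridgeWeight_succ_sub_mul a b hs
    push_cast at this
    linear_combination -this
  have hdenom : (a : ℝ) * b * (m + 1) ≤
      (i₀ + s + 1) * (b + m - (i₀ + s)) * (a + b) := by
    calc (a : ℝ) * b * (m + 1) = a * (m + 1) * b := by ring
      _ ≤ (i₀ + 1) * (a + b) * b :=
          mul_le_mul_of_nonneg_right (le_mode_succ_mul hi₀ hmax) b.cast_nonneg
      _ ≤ (i₀ + s + 1) * (a + b) * (b + m - (i₀ + s)) := by
          gcongr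
          · linarith [s.cast_nonneg (α := ℝ)]
          · linarith
      _ = _ := by ring
  calc (f (i₀ + s) - f (i₀ + s + 1)) * (a * b * (m + 1))
      ≤ (f (i₀ + s) - f (i₀ + s + 1)) *
          ((i₀ + s + 1) * (b + m - (i₀ + s)) * (a + b)) := by gcongr
    _ = f (i₀ + s) * (((i₀ + s + 1) * (a + b) - a * (m + 1)) * (a + b)) := by
        linear_combination (a + b : ℝ) * hdecrease
    _ ≤ f (i₀ + s) * ((s + 1) * (a + b) * (a + b)) := by
        gcongr
        · exact (bridgeWeight_pos a b m _).le
        · linarith [mode_mul_le hi₀ hmax]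
    _ ≤ f i₀ * ((s + 1) * (a + b) * (a + b)) := by gcongr; exact hmax _ hs.le
    _ = f i₀ * ((s + 1) * (a + b) ^ 2) := by ring

lemma sub_mul_le_of_step_le {f : ℕ → ℝ} {ε : ℝ}
    (hstep : ∀ s < r, f s - f (s + 1) ≤ ε) (hs : s ≤ r) : f 0 - s * ε ≤ f s := by
  have : ∑ j ∈ Finset.range s, (f j - f (j + 1)) ≤ s * ε := by
    simpa using Finset.sum_le_card_nsmul (Finset.range s) _ ε fun j hj =>
      hstep j ((Finset.mem_range.1 hj).trans_le hs)
  rw [Finset.sum_range_sub'] at this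
  linarith

lemma mode_add_le (ha : 0 < a) (hb : 0 < b) (hi₀ : i₀ ≤ m)
    (hmax : ∀ j ≤ m, bridgeWeight a b m j ≤ bridgeWeight a b m i₀)
    (hr : 2 * (r : ℝ) ^ 2 * (a + b) ^ 2 ≤ a * b * (m + 1)) : i₀ + r ≤ m := by
  rcases r.eq_zero_or_pos with rfl | hr₀
  · exact hi₀
  have hr₁ : (1 : ℝ) ≤ r := mod_cast hr₀
  have ha' : (0 : ℝ) < a := mod_cast ha
  have hb' : (0 : ℝ) < b := mod_cast hb
  have hrb : (r : ℝ) * (a + b) < b * (m + 1) := by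
    have hsq : (r : ℝ) * (a + b) * (2 * (a + b)) ≤ b * (m + 1) * (a + b) := by
      calc (r : ℝ) * (a + b) * (2 * (a + b)) ≤ r ^ 2 * (a + b) * (2 * (a + b)) := by
            gcongr; nlinarith
        _ = 2 * (r : ℝ) ^ 2 * (a + b) ^ 2 := by ring
        _ ≤ a * b * (m + 1) := hr
        _ ≤ b * (m + 1) * (a + b) := by nlinarith [mul_pos hb' hb', m.cast_nonneg (α := ℝ)]
    have : 0 < b * ((m : ℝ) + 1) := by positivity
    nlinarith [mul_pos this (add_pos ha' hb')]
  have : ((i₀ + r : ℕ) : ℝ) < (m + 1 : ℕ) := by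
    push_cast
    refine lt_of_mul_lt_mul_right ?_ (add_pos ha' hb').le
    linarith [mode_mul_le hi₀ hmax]
  exact Nat.lt_succ_iff.1 (mod_cast this)

lemma half_mode_le_bridgeWeight (ha : 0 < a) (hb : 0 < b) (hi₀ : i₀ ≤ m)
    (hmax : ∀ j ≤ m, bridgeWeight a b m j ≤ bridgeWeight a b m i₀)
    (hr : 2 * (r : ℝ) ^ 2 * (a + b) ^ 2 ≤ a * b * (m + 1)) (hs : s ≤ r) :
    bridgeWeight a b m i₀ / 2 ≤ bridgeWeight a b m (i₀ + s) := by
  have hrm := mode_add_le ha hb hi₀ hmax hr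
  have hf := bridgeWeight_pos a b m i₀
  set f := bridgeWeight a b m
  have hV : (0 : ℝ) < a * b * (m + 1) := by positivity
  have hstep : ∀ j < r, f (i₀ + j) - f (i₀ + (j + 1)) ≤
      f i₀ * (r * (a + b) ^ 2) / (a * b * (m + 1)) := fun j hj => by
    rw [le_div_iff₀ hV]
    refine (bridgeWeight_sub_succ_mul_le hi₀ hmax (by lia)).trans ?_
    have : (j : ℝ) + 1 ≤ r := mod_cast hj
    gcongr
  have htotal : s * (f i₀ * (r * (a + b) ^ 2) / (a * b * (m + 1))) ≤ f i₀ / 2 := by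
    rw [← mul_div_assoc, div_le_iff₀ hV]
    calc s * (f i₀ * (r * (a + b) ^ 2)) ≤ r * (f i₀ * (r * (a + b) ^ 2)) := by gcongr
      _ = f i₀ / 2 * (2 * (r : ℝ) ^ 2 * (a + b) ^ 2) := by ring
      _ ≤ f i₀ / 2 * (a * b * (m + 1)) := by gcongr
  have := sub_mul_le_of_step_le (f := fun j => f (i₀ + j)) hstep hs
  simp only [add_zero] at this
  linarith

lemma add_one_mul_bridgeWeight_le (ha : 0 < a) (hb : 0 < b) {i : ℕ} (hi : i ≤ m)
    (hr : 2 * (r : ℝ) ^ 2 * (a + b) ^ 2 ≤ a * b * (m + 1)) :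
    (r + 1) * bridgeWeight a b m i ≤ 2 * (a + 1 + (b + 1)).multichoose m := by
  obtain ⟨i₀, hi₀, hmax⟩ := (Finset.range (m + 1)).exists_max_image (bridgeWeight a b m)
    Finset.nonempty_range_add_one
  simp only [Finset.mem_range, Nat.lt_succ_iff] at hi₀ hmax
  have hrm := mode_add_le ha hb hi₀ hmax hr
  calc (r + 1) * bridgeWeight a b m i
      ≤ (r + 1) * bridgeWeight a b m i₀ := by gcongr; exact hmax i hi
    _ = 2 * ∑ _s ∈ Finset.range (r + 1), bridgeWeight a b m i₀ / 2 := by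
        rw [Finset.sum_const, Finset.card_range, nsmul_eq_mul, Nat.cast_succ]
        ring
    _ ≤ 2 * ∑ s ∈ Finset.range (r + 1), bridgeWeight a b m (i₀ + s) := by
        gcongr with s hs
        exact half_mode_le_bridgeWeight ha hb hi₀ hmax hr
          (Nat.lt_succ_iff.1 (Finset.mem_range.1 hs))
    _ = 2 * ∑ j ∈ Finset.Ico i₀ (i₀ + (r + 1)), bridgeWeight a b m j := by
        rw [Finset.sum_Ico_eq_sum_range, Nat.add_sub_cancel_left]
    _ ≤ 2 * ∑ j ∈ Finset.range (m + 1), bridgeWeight a b m j := by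
        refine mul_le_mul_of_nonneg_left (Finset.sum_le_sum_of_subset_of_nonneg
          (fun j hj => ?_) fun j _ _ => (bridgeWeight_pos a b m j).le) two_pos.le
        have := Finset.mem_Ico.1 hj
        exact Finset.mem_range.2 (by lia)
    _ = 2 * (a + 1 + (b + 1)).multichoose m := by rw [sum_bridgeWeight]

/-- Up to the constant, `√(a b (m + 1)) / (a + b)` is a lower bound for the standard deviation of
the height after `a + 1` steps. -/
theorem bridgeWeight_mul_sqrt_le {i : ℕ} (hi : i ≤ m) :
    bridgeWeight a b m i * √(a * b * (m + 1)) ≤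
      4 * (a + b) * (a + 1 + (b + 1)).multichoose m := by
  rcases a.eq_zero_or_pos with rfl | ha
  · simp only [Nat.cast_zero, zero_mul, Real.sqrt_zero, mul_zero]
    positivity
  rcases b.eq_zero_or_pos with rfl | hb
  · simp only [Nat.cast_zero, zero_mul, Real.sqrt_zero, mul_zero]
    positivity
  set σ : ℝ := √(a * b * (m + 1)) / (2 * (a + b))
  have hr : 2 * (⌊σ⌋₊ : ℝ) ^ 2 * (a + b) ^ 2 ≤ a * b * (m + 1) := by
    calc 2 * (⌊σ⌋₊ : ℝ) ^ 2 * (a + b) ^ 2 ≤ 2 * σ ^ 2 * (a + b) ^ 2 := by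
          gcongr
          exact Nat.floor_le (by positivity)
      _ = √(a * b * (m + 1)) ^ 2 / 2 := by
          simp only [σ]
          field_simp
      _ ≤ a * b * (m + 1) := by
          rw [Real.sq_sqrt (by positivity)]
          exact half_le_self (by positivity)
  calc bridgeWeight a b m i * √(a * b * (m + 1))
      = 2 * (a + b) * (σ * bridgeWeight a b m i) := by
        simp only [σ]
        field_simp
    _ ≤ 2 * (a + b) * ((⌊σ⌋₊ + 1) * bridgeWeight a b m i) := by
        gcongr
        · exact (bridgeWeight_pos a b m i).le
        · exact (Nat.lt_floor_add_one σ).le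
    _ ≤ 2 * (a + b) * (2 * (a + 1 + (b + 1)).multichoose m) :=
        mul_le_mul_of_nonneg_left (add_one_mul_bridgeWeight_le ha hb hi hr) (by positivity)
    _ = 4 * (a + b) * (a + 1 + (b + 1)).multichoose m := by ring

end LocalBound

section Bulk

lemma card_le_of_forall_mem_Icc {S : Finset ℕ} {α w : ℝ} (hw : 0 ≤ w)
    (hS : ∀ i ∈ S, (i : ℝ) ∈ Set.Icc α (α + w)) : (S.card : ℝ) ≤ w + 1 := by
  rcases S.eq_empty_or_nonempty with rfl | hne
  · rw [Finset.card_empty, Nat.cast_zero]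
    positivity
  have hcard : S.card + S.min' hne ≤ S.max' hne + 1 := by
    have hsub : S ⊆ Finset.Icc (S.min' hne) (S.max' hne) := fun i hi =>
      Finset.mem_Icc.2 ⟨S.min'_le i hi, S.le_max' i hi⟩
    have := Finset.card_le_card hsub
    have := S.min'_le_max' hne
    rw [Nat.card_Icc] at *
    lia
  have hcard' : (S.card : ℝ) + S.min' hne ≤ S.max' hne + 1 := mod_cast hcard
  linarith [(hS _ (S.min'_mem hne)).1, (hS _ (S.max'_mem hne)).2]

variable {c w τ : ℝ} {n k l m r i : ℕ}

lemma multichoose_mul_multichoose_le (hc : 0 < c) (hc1 : c ≤ 1) (hk : c * n + 1 ≤ k)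
    (hl : c * n + 1 ≤ l) (hkl : k + l ≤ n) (hr : c * n ≤ r + 1) (hi : i ≤ r) :
    (k.multichoose i * l.multichoose (r - i) : ℝ) ≤
      4 / (c ^ 2 * √n) * (k + l).multichoose r := by
  have hcn : 0 ≤ c * n := by positivity
  obtain ⟨a, rfl⟩ : ∃ a, k = a + 1 :=
    Nat.exists_eq_succ_of_ne_zero (by rintro rfl; norm_num at hk; linarith)
  obtain ⟨b, rfl⟩ : ∃ b, l = b + 1 :=
    Nat.exists_eq_succ_of_ne_zero (by rintro rfl; norm_num at hl; linarith)
  have hn : (0 : ℝ) < n := Nat.cast_pos.2 (by lia)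
  push_cast at hk hl
  have hsqrt : c ^ 2 * √n * n ≤ √(a * b * (r + 1)) := by
    refine Real.le_sqrt_of_sq_le ?_
    calc (c ^ 2 * √n * n) ^ 2 = c * ((c * n) * (c * n) * (c * n)) := by
          rw [mul_pow, mul_pow, Real.sq_sqrt n.cast_nonneg]
          ring
      _ ≤ (c * n) * (c * n) * (c * n) := mul_le_of_le_one_left (by positivity) hc1
      _ ≤ a * b * (r + 1) := by gcongr <;> linarith
  have hab : (a : ℝ) + b ≤ n := mod_cast (by lia : a + b ≤ n)
  rw [div_mul_eq_mul_div, le_div_iff₀ (by positivity)]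
  refine le_of_mul_le_mul_right ?_ hn
  calc bridgeWeight a b r i * (c ^ 2 * √n) * n
      = bridgeWeight a b r i * (c ^ 2 * √n * n) := mul_assoc _ _ _
    _ ≤ bridgeWeight a b r i * √(a * b * (r + 1)) :=
        mul_le_mul_of_nonneg_left hsqrt (bridgeWeight_pos a b r i).le
    _ ≤ 4 * (a + b) * (a + 1 + (b + 1)).multichoose r := bridgeWeight_mul_sqrt_le hi
    _ ≤ 4 * n * (a + 1 + (b + 1)).multichoose r := by gcongr
    _ = 4 * (a + 1 + (b + 1)).multichoose r * n := by ring

lemma multichoose_half_le (hc : 0 < c) (hc1 : c ≤ 1) (hn : 0 < n) (hm : 2 * (c * n) ≤ m) :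
    (n.multichoose (m / 2) : ℝ) ≤ 3 / (c * n) * n.multichoose m := by
  have hn' : (0 : ℝ) < n := Nat.cast_pos.2 hn
  have hm' : (0 : ℝ) < m := by linarith [mul_pos hc hn']
  have hhalf : (m : ℝ) / 2 ≤ (m - m / 2 : ℕ) := by
    rw [div_le_iff₀ two_pos]
    exact_mod_cast (by lia : m ≤ (m - m / 2) * 2)
  have hcount : (n : ℝ) * (m / 2 * n.multichoose (m / 2)) ≤ (n + m) * n.multichoose m := by
    calc (n : ℝ) * (m / 2 * n.multichoose (m / 2))
        ≤ n * ((m - m / 2 : ℕ) * n.multichoose (m / 2)) := by gcongr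
      _ ≤ (n + m) * n.multichoose m := mod_cast mul_sub_mul_multichoose_le n m (m / 2)
  have hratio : (n + m) * (c * n) ≤ 3 * (n * (m / 2)) := by
    nlinarith [mul_le_mul_of_nonneg_left hm hn'.le, mul_le_mul_of_nonneg_right hc1
      (mul_pos hn' hm').le]
  rw [div_mul_eq_mul_div, le_div_iff₀ (by positivity)]
  refine le_of_mul_le_mul_left ?_ (by positivity : (0 : ℝ) < n * (m / 2))
  calc n * (m / 2) * (n.multichoose (m / 2) * (c * n))
      = n * (m / 2 * n.multichoose (m / 2)) * (c * n) := by ring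
    _ ≤ (n + m) * n.multichoose m * (c * n) := by gcongr
    _ = (n + m) * (c * n) * n.multichoose m := by ring
    _ ≤ 3 * (n * (m / 2)) * n.multichoose m := by gcongr
    _ = n * (m / 2) * (3 * n.multichoose m) := by ring

lemma sum_range_sum_multichoose_mul_le (S : ℕ → Finset ℕ)
    (hS : ∀ r, S r ⊆ Finset.range (r + 1)) (k l j : ℕ) :
    ∑ r ∈ Finset.range (j + 1), ∑ i ∈ S r, k.multichoose i * l.multichoose (r - i) ≤
      (k + l + 1).multichoose j := by
  rw [← sum_range_multichoose_eq_multichoose_succ]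
  refine Finset.sum_le_sum fun r _ => ?_
  rw [← sum_multichoose_mul_multichoose]
  exact Finset.sum_le_sum_of_subset (hS r)

lemma sum_window_multichoose_mul_le (hc : 0 < c) (hc1 : c ≤ 1) (hk : c * n + 1 ≤ k)
    (hl : c * n + 1 ≤ l) (hkl : k + l + 1 = n) (hm : 2 * (c * n) ≤ m) {S : ℕ → Finset ℕ}
    (hS : ∀ r, S r ⊆ Finset.range (r + 1)) {N : ℝ} (hN : ∀ r, (S r).card ≤ N) :
    ∑ r ∈ Finset.range (m + 1), ∑ i ∈ S r, (k.multichoose i * l.multichoose (r - i) : ℝ) ≤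
      (3 / (c * n) + N * (4 / (c ^ 2 * √n))) * n.multichoose m := by
  have hN₀ : 0 ≤ N := (Nat.cast_nonneg _).trans (hN 0)
  have hsmall : ∑ r ∈ Finset.range (m / 2 + 1), ∑ i ∈ S r,
      (k.multichoose i * l.multichoose (r - i) : ℝ) ≤ n.multichoose (m / 2) := by
    rw [← hkl]
    exact_mod_cast sum_range_sum_multichoose_mul_le S hS k l (m / 2)
  have hlarge : ∑ r ∈ Finset.Ico (m / 2 + 1) (m + 1), ∑ i ∈ S r,
      (k.multichoose i * l.multichoose (r - i) : ℝ) ≤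
        N * (4 / (c ^ 2 * √n)) * n.multichoose m := by
    have hinner : ∀ r ∈ Finset.Ico (m / 2 + 1) (m + 1),
        ∑ i ∈ S r, (k.multichoose i * l.multichoose (r - i) : ℝ) ≤
          N * (4 / (c ^ 2 * √n)) * (k + l).multichoose r := fun r hr => by
      have hmr : (m : ℝ) ≤ 2 * (r + 1) :=
        mod_cast (by have := (Finset.mem_Ico.1 hr).1; lia : m ≤ 2 * (r + 1))
      refine (Finset.sum_le_card_nsmul _ _ _ fun i hi => multichoose_mul_multichoose_le hc hc1 hk hl
        (by lia) (by linarith) (Nat.lt_succ_iff.1 (Finset.mem_range.1 (hS r hi)))).trans ?_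
      rw [nsmul_eq_mul, mul_assoc N]
      exact mul_le_mul_of_nonneg_right (hN r) (by positivity)
    refine (Finset.sum_le_sum hinner).trans ?_
    rw [← Finset.mul_sum]
    gcongr
    rw [← hkl, ← sum_range_multichoose_eq_multichoose_succ, Nat.cast_sum]
    exact Finset.sum_le_sum_of_subset_of_nonneg
      (fun r hr => Finset.mem_range.2 (Finset.mem_Ico.1 hr).2) fun _ _ _ => Nat.cast_nonneg _
  rw [← Finset.sum_range_add_sum_Ico _ (by lia : m / 2 + 1 ≤ m + 1), add_mul]
  exact add_le_add (hsmall.trans (multichoose_half_le hc hc1 (by lia) hm)) hlarge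

lemma UniformOn.measure_mem_le {Ω E : Type*} [MeasurableSpace Ω] {P : Measure Ω} {X : Ω → E}
    {S : Set E} (hX : UniformOn P X S) (A : Set E) (hA : (S ∩ A).Finite) :
    P {ω | X ω ∈ A} ≤ (S ∩ A).ncard / Nat.card S := by
  have hcover : {ω | X ω ∈ A} ⊆ ⋃ q ∈ hA.toFinset, {ω | X ω = q} := fun ω hω => by
    simp only [Set.mem_iUnion, Set.Finite.mem_toFinset]
    exact ⟨X ω, ⟨hX.1 ω, hω⟩, rfl⟩
  calc P {ω | X ω ∈ A} ≤ ∑ q ∈ hA.toFinset, P {ω | X ω = q} :=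
        (measure_mono hcover).trans (measure_biUnion_finset_le _ _)
    _ = ∑ _q ∈ hA.toFinset, (Nat.card S : ℝ≥0∞)⁻¹ :=
        Finset.sum_congr rfl fun q hq => hX.2 q ((hA.mem_toFinset.1 hq).1)
    _ = (S ∩ A).ncard / Nat.card S := by
        rw [Finset.sum_const, nsmul_eq_mul, Set.ncard_eq_toFinset_card _ hA, div_eq_mul_inv]

lemma ncard_OmegaPath_consecutive_le (p : ℤ → ℤ → Prop) [DecidableRel p] (x : ℤ)
    (hkl : k + l + 1 = n) (m : ℕ) :
    {L ∈ OmegaPath 0 n x (x + m) | p (L k) (L (k + 1))}.ncard ≤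
      ∑ r ∈ Finset.range (m + 1),
        ∑ i ∈ (Finset.range (r + 1)).filter fun i : ℕ => p (x + i) (x + i + (m - r)),
          k.multichoose i * l.multichoose (r - i) := by
  have h := encard_OmegaPath_consecutive_le p 0 x k l m
  simp only [zero_add] at h
  rw [show (k : ℤ) + 1 + l = n by lia] at h
  exact (Set.encard_le_coe_iff_finite_ncard_le.1 (mod_cast h)).2

lemma interpZ_eq (L : ℤ → ℤ) (hτ : 0 ≤ τ) :
    interpZ L τ = L ⌊τ⌋₊ + (τ - ⌊τ⌋₊) * (L (⌊τ⌋₊ + 1) - L ⌊τ⌋₊) := by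
  have : ((⌊τ⌋₊ : ℤ) : ℝ) = ⌊τ⌋₊ := Int.cast_natCast _
  rw [interpZ, interp, ← Int.natCast_floor_eq_floor hτ, this]

open Classical in
lemma ncard_interpZ_mem_Icc_le (hc : 0 < c) (hc1 : c ≤ 1) (hw : 0 ≤ w)
    (hτ : τ ∈ Set.Icc (c * n + 2) (n - c * n - 2)) (x : ℤ) (hm : 2 * (c * n) ≤ m) (α : ℝ) :
    ({L ∈ OmegaPath 0 n x (x + m) | interpZ L τ ∈ Set.Icc α (α + w)}.ncard : ℝ) ≤
      (4 * w + 7) / (c ^ 2 * √n) * n.multichoose m := by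
  have hcn : 0 ≤ c * n := by positivity
  have hτ₀ : 0 ≤ τ := by linarith [hτ.1]
  have hfloor := Nat.floor_le hτ₀
  have hfloor' := Nat.lt_floor_add_one τ
  set k := ⌊τ⌋₊
  obtain ⟨l, hl⟩ : ∃ l, n = k + l + 1 :=
    Nat.exists_eq_add_of_lt (Nat.cast_lt (α := ℝ).1 (by linarith [hτ.2]))
  have hl' : (n : ℝ) = k + l + 1 := mod_cast hl
  let p (u v : ℤ) : Prop := u + (τ - k) * (v - u) ∈ Set.Icc α (α + w)
  have hcard (r : ℕ) : (((Finset.range (r + 1)).filter fun i : ℕ =>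
      p (x + i) (x + i + (m - r))).card : ℝ) ≤ w + 1 := by
    refine card_le_of_forall_mem_Icc (α := α - x - (τ - k) * (m - r)) hw fun i hi => ?_
    obtain ⟨h₁, h₂⟩ := (Finset.mem_filter.1 hi).2
    push_cast at h₁ h₂
    constructor <;> linarith
  have hn : (1 : ℝ) ≤ n := by linarith [k.cast_nonneg (α := ℝ), l.cast_nonneg (α := ℝ)]
  have hconst : 3 / (c * n) ≤ 3 / (c ^ 2 * √n) := by
    have hsqrt : √n ≤ n := Real.sqrt_le_self_iff.2 (Or.inr hn)
    gcongr
    nlinarith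
  have hcount := ncard_OmegaPath_consecutive_le p x hl.symm m
  simp only [interpZ_eq _ hτ₀]
  calc _ ≤ _ := Nat.cast_le.2 hcount
    _ ≤ (3 / (c * n) + (w + 1) * (4 / (c ^ 2 * √n))) * n.multichoose m := by
        push_cast
        exact sum_window_multichoose_mul_le hc hc1 (by linarith [hτ.1])
          (by linarith [hτ.2]) hl.symm hm (fun r => Finset.filter_subset _ _) hcard
    _ ≤ (3 / (c ^ 2 * √n) + (w + 1) * (4 / (c ^ 2 * √n))) * n.multichoose m := by gcongr
    _ = (4 * w + 7) / (c ^ 2 * √n) * n.multichoose m := by ring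

theorem measure_interpZ_mem_Icc_le {Ω : Type*} [MeasurableSpace Ω] {P : Measure Ω}
    {Q : Ω → ℤ → ℤ} {x y : ℤ} (hQ : UniformOn P Q (OmegaPath 0 n x y)) (hc : 0 < c)
    (hc1 : c ≤ 1) (hw : 0 ≤ w) (hτ : τ ∈ Set.Icc (c * n + 2) (n - c * n - 2))
    (hxy : 2 * (c * n) ≤ y - x) (α : ℝ) :
    P {ω | interpZ (Q ω) τ ∈ Set.Icc α (α + w)} ≤
      ENNReal.ofReal ((4 * w + 7) / (c ^ 2 * √n)) := by
  have hcn : 0 ≤ c * n := by positivity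
  obtain ⟨m, hm⟩ : ∃ m : ℕ, y - x = m :=
    Int.eq_ofNat_of_zero_le (Int.cast_nonneg_iff (R := ℝ).1 (by push_cast; linarith))
  obtain rfl : y = x + m := by lia
  have hcard : (OmegaPath 0 n x (x + m)).encard = n.multichoose m :=
    encard_OmegaPath_of_add_eq (zero_add _) rfl
  have hfin := Set.finite_of_encard_eq_coe hcard
  refine (hQ.measure_mem_le {L | interpZ L τ ∈ Set.Icc α (α + w)}
    (hfin.subset Set.inter_subset_left)).trans ?_
  rw [Nat.card_coe_set_eq, Set.ncard_def (OmegaPath 0 n x (x + m)), hcard, ENat.toNat_natCast]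
  refine ENNReal.div_le_of_le_mul ?_
  rw [← ENNReal.ofReal_natCast, ← ENNReal.ofReal_natCast, ← ENNReal.ofReal_mul (by positivity)]
  exact ENNReal.ofReal_le_ofReal
    (ncard_interpZ_mem_Icc_le hc hc1 hw hτ x (by simpa using hxy) α)

end Bulk

lemma eventually_half_mul_le_sub {p : ℝ} (hp : 0 < p) (M : ℝ) :
    ∀ᶠ n : ℕ in atTop, ∀ x y : ℤ, |(x : ℝ)| ≤ M * √n → |(y : ℝ) - p * n| ≤ M * √n →
      p / 2 * n ≤ y - x := by
  have hsqrt : ∀ᶠ n : ℕ in atTop, 4 * M / p ≤ √n :=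
    (Real.tendsto_sqrt_atTop.comp tendsto_natCast_atTop_atTop).eventually_ge_atTop _
  filter_upwards [hsqrt] with n hn x y hx hy
  have : 2 * (M * √n) ≤ p / 2 * n := by
    rw [div_le_iff₀ hp] at hn
    nlinarith [Real.mul_self_sqrt n.cast_nonneg, Real.sqrt_nonneg n]
  linarith [(abs_le.1 hx).2, (abs_le.1 hy).1]

lemma eventually_div_mul_sqrt_lt {η : ℝ} (hη : 0 < η) (B D : ℝ) :
    ∀ᶠ n : ℕ in atTop, B / (D * √n) < η := by
  have : Tendsto (fun n : ℕ => B / D / √n) atTop (𝓝 0) :=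
    (Real.tendsto_sqrt_atTop.comp tendsto_natCast_atTop_atTop).const_div_atTop _
  simpa only [div_div] using this.eventually_lt_const hη

theorem no_concentration_in_bulk_general {ρ η δ₁ : ℝ} (hρ : 0 < ρ) (hη : 0 < η)
    (hδ₁ : 0 < δ₁) :
    ∃ δ > 0, ∀ᶠ n : ℕ in atTop, ∀ x y : ℤ, ρ * n ≤ y - x →
      ∀ t ∈ Set.Icc δ₁ (1 - δ₁), ∀ a b : ℝ,
      ∀ (Ω : Type*) [MeasurableSpace Ω] (P : Measure Ω) (Q : Ω → ℤ → ℤ),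
        UniformOn P Q (OmegaPath 0 n x y) →
          P {ω | (√n)⁻¹ * (interpZ (Q ω) (t * n) - b) ∈ Set.Icc (a - δ) (a + δ)} <
            ENNReal.ofReal η := by
  obtain ⟨c, hc, hcmin⟩ : ∃ c : ℝ, 0 < c ∧ c ≤ min 1 (min (ρ / 2) (δ₁ / 2)) :=
    ⟨_, by positivity, le_rfl⟩
  simp only [le_min_iff] at hcmin
  obtain ⟨hc1, hcρ, hcδ₁⟩ := hcmin
  have htime : ∀ᶠ n : ℕ in atTop, 2 / c ≤ n := tendsto_natCast_atTop_atTop.eventually_ge_atTop _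
  refine ⟨c ^ 2 * η / 16, by positivity, ?_⟩
  filter_upwards [htime, eventually_div_mul_sqrt_lt (half_pos hη) 7 (c ^ 2)]
    with n hn herror x y hxy t ht a b Ω _ P Q hQ
  have hn₀ : (0 : ℝ) < n := (by positivity : 0 < 2 / c).trans_le hn
  have hsqrt : 0 < √n := Real.sqrt_pos.2 hn₀
  rw [div_le_iff₀' hc] at hn
  have hτ : t * n ∈ Set.Icc (c * n + 2) (n - c * n - 2) := by
    have : 2 * c ≤ δ₁ := by linarith
    constructor <;> nlinarith [ht.1, ht.2]
  set δ := c ^ 2 * η / 16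
  have hscale : {ω | (√n)⁻¹ * (interpZ (Q ω) (t * n) - b) ∈ Set.Icc (a - δ) (a + δ)} ⊆
      {ω | interpZ (Q ω) (t * n) ∈
        Set.Icc (b + (a - δ) * √n) (b + (a - δ) * √n + 2 * δ * √n)} := fun ω hω => by
    obtain ⟨h₁, h₂⟩ := hω
    rw [inv_mul_eq_div] at h₁ h₂
    rw [le_div_iff₀ hsqrt] at h₁
    rw [div_le_iff₀ hsqrt] at h₂
    constructor <;> linarith
  refine ((measure_mono hscale).trans (measure_interpZ_mem_Icc_le hQ hc hc1 (by positivity) hτ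
    (by nlinarith) _)).trans_lt ((ENNReal.ofReal_lt_ofReal_iff hη).2 ?_)
  calc (4 * (2 * δ * √n) + 7) / (c ^ 2 * √n) = η / 2 + 7 / (c ^ 2 * √n) := by
        simp only [δ]
        field_simp
        ring
    _ < η := by linarith

/-- (Lemma 3.1, no concentration in the bulk.) The one-point distribution of a uniform
geometric random walk bridge does not concentrate on small intervals. -/
theorem no_concentration_in_bulk
    (p η M : ℝ) (hp : 0 < p) (hη : 0 < η) (hM : 0 < M)
    (δ1 : ℝ) (hδ1 : δ1 ∈ Set.Ioo (0 : ℝ) (1 / 2)) :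
    ∃ (N1 : ℕ) (δ : ℝ), 0 < δ ∧
      ∀ n : ℕ, N1 ≤ n → ∀ x y : ℤ, x ≤ y →
        |(x : ℝ)| ≤ M * Real.sqrt n → |(y : ℝ) - p * n| ≤ M * Real.sqrt n →
        ∀ t ∈ Set.Icc δ1 (1 - δ1), ∀ a : ℝ,
        ∀ (Ω : Type) (_ : MeasurableSpace Ω) (P : Measure Ω), IsProbabilityMeasure P →
        ∀ Q : Ω → ℤ → ℤ, UniformOn P Q (OmegaPath 0 n x y) →
          P {ω | (Real.sqrt n)⁻¹ * (interpZ (Q ω) (t * n) - p * t * n) ∈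
              Set.Icc (a - δ) (a + δ)} < ENNReal.ofReal η := by
  obtain ⟨δ, hδ, h⟩ := no_concentration_in_bulk_general (half_pos hp) hη hδ1.1
  obtain ⟨N1, hN1⟩ := eventually_atTop.1 (h.and (eventually_half_mul_le_sub hp M))
  refine ⟨N1, δ, hδ, fun n hn x y _ hx hy t ht a Ω _ P _ Q hQ => ?_⟩
  exact (hN1 n hn).1 x y ((hN1 n hn).2 x y hx hy) t ht a _ Ω P Q hQ
end
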